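/- Let q = p^f be a power of a prime p, let n ≥ 2 and suppose GL_n(q) is not solvable. Let π be a set of primes with 2 ∉ π and p ∉ π such that |π ∩ π(GL_n(q))| ≥ 2, and suppose GL_n(q) has a Hall π-subgroup H. Set G = H·SL_n(q). Then there exist x, y, z ∈ G such that H ∩ H^x ∩ H^y ∩ H^z is contained in the center Z(GL_n(q)), i.e. consists of scalar matrices. -/

import Mathlib

open Matrix Pointwise

/-- `H^x = x⁻¹ H x`. -/
def conjBy {G : Type*} [Group G] (H : Subgroup G) (x : G) : Subgroup G :=
  Subgroup.map ((MulAut.conj x⁻¹).toMonoidHom) H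

/-- Hall π-subgroup of the whole group. -/
def IsHallSubgroup {G : Type*} [Group G] (π : Set ℕ) (H : Subgroup G) : Prop :=
  (∀ r : ℕ, r.Prime → r ∣ Nat.card H → r ∈ π) ∧ ∀ r ∈ π, ¬ r ∣ H.index

/-- Hall π-subgroup of the subgroup `K`. -/
def IsHallSubgroupIn {G : Type*} [Group G] (π : Set ℕ) (K H : Subgroup G) : Prop :=
  H ≤ K ∧ (∀ r : ℕ, r.Prime → r ∣ Nat.card H → r ∈ π) ∧ ∀ r ∈ π, ¬ r ∣ H.relIndex K

/-- The subgroup `SL_n` of `GL_n`. -/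
def SLsub (n : ℕ) (F : Type*) [Field F] : Subgroup (GL (Fin n) F) where
  carrier := {g | Matrix.det (g : Matrix (Fin n) (Fin n) F) = 1}
  one_mem' := by simp
  mul_mem' := by
    intro a b ha hb
    simp only [Set.mem_setOf_eq, Units.val_mul, Matrix.det_mul] at *
    rw [ha, hb, one_mul]
  inv_mem' := by
    intro g hg
    simp only [Set.mem_setOf_eq] at *
    have h1 : ((g⁻¹ : GL (Fin n) F) : Matrix (Fin n) (Fin n) F) *
        (g : Matrix (Fin n) (Fin n) F) = 1 := g.inv_mul
    have := congrArg Matrix.det h1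
    rw [Matrix.det_mul, Matrix.det_one, hg, mul_one] at this
    exact this

/-- The group of similitudes of the bilinear form `B` (acting on row vectors). -/
def similitudeGroup {n : ℕ} {F : Type*} [Field F]
    (B : (Fin n → F) → (Fin n → F) → F) : Subgroup (GL (Fin n) F) where
  carrier := {g | ∃ c : Fˣ, ∀ u v : Fin n → F,
    B (Matrix.vecMul u (g : Matrix (Fin n) (Fin n) F))
      (Matrix.vecMul v (g : Matrix (Fin n) (Fin n) F)) = (c : F) * B u v}
  one_mem' := ⟨1, by simp⟩
  mul_mem' := by
    rintro a b ⟨c, hc⟩ ⟨d, hd⟩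
    refine ⟨c * d, fun u v => ?_⟩
    simp only [Units.val_mul, ← Matrix.vecMul_vecMul, hd, hc]
    ring
  inv_mem' := by
    rintro g ⟨c, hc⟩
    refine ⟨c⁻¹, fun u v => ?_⟩
    have h1 : ∀ w : Fin n → F, Matrix.vecMul
        (Matrix.vecMul w ((g⁻¹ : GL (Fin n) F) : Matrix (Fin n) (Fin n) F))
        (g : Matrix (Fin n) (Fin n) F) = w := by
      intro w
      rw [Matrix.vecMul_vecMul, g.inv_mul, Matrix.vecMul_one]
    have h2 := hc (Matrix.vecMul u ((g⁻¹ : GL (Fin n) F) : Matrix (Fin n) (Fin n) F))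
      (Matrix.vecMul v ((g⁻¹ : GL (Fin n) F) : Matrix (Fin n) (Fin n) F))
    rw [h1, h1] at h2
    rw [h2, Units.val_inv_eq_inv_val, inv_mul_cancel_left₀ (by exact_mod_cast c.ne_zero)]

/-- The isometry group of the bilinear form `B` (acting on row vectors). -/
def isometryGroup {n : ℕ} {F : Type*} [Field F]
    (B : (Fin n → F) → (Fin n → F) → F) : Subgroup (GL (Fin n) F) where
  carrier := {g | ∀ u v : Fin n → F,
    B (Matrix.vecMul u (g : Matrix (Fin n) (Fin n) F))
      (Matrix.vecMul v (g : Matrix (Fin n) (Fin n) F)) = B u v}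
  one_mem' := by simp
  mul_mem' := by
    intro a b ha hb u v
    simp only [Set.mem_setOf_eq] at ha hb
    simp only [Units.val_mul, ← Matrix.vecMul_vecMul]
    rw [hb, ha]
  inv_mem' := by
    intro g hg u v
    have h1 : ∀ w : Fin n → F, Matrix.vecMul
        (Matrix.vecMul w ((g⁻¹ : GL (Fin n) F) : Matrix (Fin n) (Fin n) F))
        (g : Matrix (Fin n) (Fin n) F) = w := by
      intro w
      rw [Matrix.vecMul_vecMul, g.inv_mul, Matrix.vecMul_one]
    have h2 := hg (Matrix.vecMul u ((g⁻¹ : GL (Fin n) F) : Matrix (Fin n) (Fin n) F))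
      (Matrix.vecMul v ((g⁻¹ : GL (Fin n) F) : Matrix (Fin n) (Fin n) F))
    rw [h1, h1] at h2
    exact h2.symm

/-- The group of similitudes of the quadratic form `Q` (acting on row vectors). -/
def qSimilitudeGroup {n : ℕ} {F : Type*} [Field F]
    (Q : (Fin n → F) → F) : Subgroup (GL (Fin n) F) where
  carrier := {g | ∃ c : Fˣ, ∀ v : Fin n → F,
    Q (Matrix.vecMul v (g : Matrix (Fin n) (Fin n) F)) = (c : F) * Q v}
  one_mem' := ⟨1, by simp⟩
  mul_mem' := by
    rintro a b ⟨c, hc⟩ ⟨d, hd⟩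
    refine ⟨c * d, fun v => ?_⟩
    simp only [Units.val_mul, ← Matrix.vecMul_vecMul, hd, hc]
    ring
  inv_mem' := by
    rintro g ⟨c, hc⟩
    refine ⟨c⁻¹, fun v => ?_⟩
    have h1 : ∀ w : Fin n → F, Matrix.vecMul
        (Matrix.vecMul w ((g⁻¹ : GL (Fin n) F) : Matrix (Fin n) (Fin n) F))
        (g : Matrix (Fin n) (Fin n) F) = w := by
      intro w
      rw [Matrix.vecMul_vecMul, g.inv_mul, Matrix.vecMul_one]
    have h2 := hc (Matrix.vecMul v ((g⁻¹ : GL (Fin n) F) : Matrix (Fin n) (Fin n) F))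
    rw [h1] at h2
    rw [h2, Units.val_inv_eq_inv_val, inv_mul_cancel_left₀ (by exact_mod_cast c.ne_zero)]

/-- The unitary group `GU_n` with respect to the field automorphism `φ`. -/
def GUgrp (n : ℕ) {K : Type*} [Field K] (φ : K →+* K) : Subgroup (GL (Fin n) K) where
  carrier := {g | ((g : Matrix (Fin n) (Fin n) K).map φ)ᵀ * (g : Matrix (Fin n) (Fin n) K) = 1}
  one_mem' := by
    simp [Matrix.map_one φ φ.map_zero φ.map_one]
  mul_mem' := by
    intro a b ha hb
    simp only [Set.mem_setOf_eq, Units.val_mul, Matrix.map_mul, Matrix.transpose_mul] at *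
    calc ((b : Matrix (Fin n) (Fin n) K).map φ)ᵀ * ((a : Matrix (Fin n) (Fin n) K).map φ)ᵀ *
          ((a : Matrix (Fin n) (Fin n) K) * (b : Matrix (Fin n) (Fin n) K))
        = ((b : Matrix (Fin n) (Fin n) K).map φ)ᵀ *
          (((a : Matrix (Fin n) (Fin n) K).map φ)ᵀ * (a : Matrix (Fin n) (Fin n) K)) *
          (b : Matrix (Fin n) (Fin n) K) := by noncomm_ring
      _ = 1 := by rw [ha, mul_one, hb]
  inv_mem' := by
    intro g hg
    simp only [Set.mem_setOf_eq] at *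
    have hcomm : (g : Matrix (Fin n) (Fin n) K) * ((g : Matrix (Fin n) (Fin n) K).map φ)ᵀ = 1 :=
      mul_eq_one_comm.mp hg
    have h1 : ((g : Matrix (Fin n) (Fin n) K) * ((g⁻¹ : GL (Fin n) K) : Matrix (Fin n) (Fin n) K)).map φ = 1 := by
      rw [g.mul_inv]
      exact Matrix.map_one φ φ.map_zero φ.map_one
    rw [Matrix.map_mul] at h1
    have h2 := congrArg Matrix.transpose h1
    rw [Matrix.transpose_mul, Matrix.transpose_one] at h2
    calc (((g⁻¹ : GL (Fin n) K) : Matrix (Fin n) (Fin n) K).map φ)ᵀ *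
          ((g⁻¹ : GL (Fin n) K) : Matrix (Fin n) (Fin n) K)
        = (((g⁻¹ : GL (Fin n) K) : Matrix (Fin n) (Fin n) K).map φ)ᵀ *
          (((g : Matrix (Fin n) (Fin n) K).map φ)ᵀ * (g : Matrix (Fin n) (Fin n) K)) *
          ((g⁻¹ : GL (Fin n) K) : Matrix (Fin n) (Fin n) K) := by rw [hg, mul_one]
      _ = ((((g⁻¹ : GL (Fin n) K) : Matrix (Fin n) (Fin n) K).map φ)ᵀ *
          ((g : Matrix (Fin n) (Fin n) K).map φ)ᵀ) *
          ((g : Matrix (Fin n) (Fin n) K) * ((g⁻¹ : GL (Fin n) K) : Matrix (Fin n) (Fin n) K)) := by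
            noncomm_ring
      _ = 1 := by rw [h2, g.mul_inv, mul_one]

/-!
Let `q` be the order of the field and `n` the dimension of `V`. Adjoin to `H` the scalars of
exponent `|H|`, and choose `x, y, z` uniformly at random in `SL(V)`. If `P g` is the probability
that `g` lies in `H^x`, then the expected number of non-scalar elements of `H ∩ H^x ∩ H^y ∩ H^z` is
`∑ P g ^ 3`, over the non-scalar `g ∈ H`.
A bad intersection contains the group `Z` of scalars of `H` properly and has odd order, hence at
least `2|Z|` non-scalar elements; so it suffices that the sum is smaller than `2|Z|`.

Two estimates achieve this. First, `|H|` is bounded modulo scalars: in dimension `2` a group of odd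
order prime to `q` is abelian, and in higher dimension one passes to the stabilizer of a vector.
Secondly, `P g ≤ q ^ (-d)`, where `d = j (n - j)` if `g` has an eigenspace of codimension `j < n/2`,
and `d = n (n - 1) / 4` if `g` has no eigenspace of dimension larger than `n/2`. The element `g` is
semisimple, so it splits into blocks; since an element of order prime to `q` is determined by its
diagonal blocks within a block triangular subgroup of order prime to `q`, every splitting
contributes `dim A * dim B - dim Hom_g(A, B)` to `d`, and an irreducible block is treated by
comparing its centralizer with the bound for `|H|`.

For `q = 2` the decay is only `n (n - 2) / 4`, and this is compensated by the fact that a subgroup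
of `GL₄(2)` of odd order cannot have order `315`.
-/

open scoped Classical in
lemma natCard_subtype_comm {α β : Type*} [Fintype α] [Fintype β] (r : α → β → Prop) :
    ∑ a, Nat.card {b // r a b} = ∑ b, Nat.card {a // r a b} := by
  simpa only [Nat.subtype_card _ fun _ => Finset.mem_filter_univ _, Finset.bipartiteAbove,
    Finset.bipartiteBelow] using
    Finset.sum_card_bipartiteAbove_eq_sum_card_bipartiteBelow (s := Finset.univ)
      (t := Finset.univ) r

lemma natCard_triple {α : Type*} (p : α → Prop) :
    Nat.card {t : α × α × α // p t.1 ∧ p t.2.1 ∧ p t.2.2} = Nat.card {x // p x} ^ 3 := by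
  rw [Nat.card_congr (Equiv.subtypeProdEquivProd (p := p) (q := fun t : α × α => p t.1 ∧ p t.2)),
    Nat.card_prod, Nat.card_congr (Equiv.subtypeProdEquivProd (p := p) (q := p)), Nat.card_prod]
  ring

section RandomConjugates

variable {G : Type*} [Group G]

lemma mem_conjBy {H : Subgroup G} {x g : G} : g ∈ conjBy H x ↔ x * g * x⁻¹ ∈ H := by
  refine (Subgroup.mem_map_equiv (f := MulAut.conj x⁻¹)).trans ?_
  rw [MulAut.conj_symm_apply, inv_inv]

lemma mem_conjBy_mul {H : Subgroup G} {x u g : G} :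
    g ∈ conjBy H (x * u) ↔ u * g * u⁻¹ ∈ conjBy H x := by
  simp only [mem_conjBy, _root_.mul_inv_rev, mul_assoc]

/-- The probability that `g` lies in the conjugate `H^x` of a uniformly random `x ∈ S`. -/
noncomputable def conjProb (S H : Subgroup G) (g : G) : ℝ :=
  Nat.card {x : S // g ∈ conjBy H x} / Nat.card S

lemma conjProb_nonneg (S H : Subgroup G) (g : G) : 0 ≤ conjProb S H g := by
  unfold conjProb; positivity

section Finite

variable [Finite G]

lemma conjProb_le_one (S H : Subgroup G) (g : G) : conjProb S H g ≤ 1 :=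
  div_le_one_of_le₀ (mod_cast Finite.card_subtype_le _) (Nat.cast_nonneg _)

lemma conjProb_mul_card (S H : Subgroup G) (g : G) :
    conjProb S H g * Nat.card S = Nat.card {x : S // g ∈ conjBy H x} :=
  div_mul_cancel₀ _ (mod_cast Nat.card_pos.ne')

/-- Averaging: replacing `x` by `x * u i` does not change the distribution of `x`. -/
lemma conjProb_le_of_average {S H : Subgroup G} {g : G} {c : ℝ} {ι : Type*} [Fintype ι]
    [Nonempty ι] (u : ι → S)
    (h : ∀ x : S, (Nat.card {i // (u i : G) * g * (u i : G)⁻¹ ∈ conjBy H x} : ℝ) ≤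
      c * Fintype.card ι) :
    conjProb S H g ≤ c := by
  have := Fintype.ofFinite S
  have htranslate (i : ι) :
      Nat.card {x : S // (u i : G) * g * (u i : G)⁻¹ ∈ conjBy H x} =
        Nat.card {x : S // g ∈ conjBy H x} :=
    Nat.card_congr ((Equiv.mulRight (u i)).subtypeEquiv fun x => by
      simp only [Equiv.coe_mulRight, Subgroup.coe_mul, mem_conjBy_mul])
  have hcount := natCard_subtype_comm
    fun (x : S) (i : ι) => (u i : G) * g * (u i : G)⁻¹ ∈ conjBy H x
  simp only [htranslate, Finset.sum_const, Finset.card_univ, smul_eq_mul] at hcount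
  have hsum := Finset.sum_le_sum fun x (_ : x ∈ Finset.univ) => h x
  rw [← Nat.cast_sum, hcount, Finset.sum_const, Finset.card_univ, nsmul_eq_mul] at hsum
  have hι : (0 : ℝ) < Fintype.card ι := mod_cast Fintype.card_pos
  rw [conjProb, div_le_iff₀ (mod_cast Nat.card_pos), Nat.card_eq_fintype_card (α := S)]
  push_cast at hsum
  nlinarith

/-- Elements of `S` conjugating `g` to the same element differ by the centralizer of `g`. -/
lemma conjProb_mul_card_le {S H : Subgroup G} {g : G} {T : Set G}
    (hT : ∀ x ∈ S, g ∈ conjBy H x → x * g * x⁻¹ ∈ T) :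
    conjProb S H g * Nat.card S ≤
      T.ncard * Nat.card (S ⊓ Subgroup.centralizer {g} : Subgroup G) := by
  classical
  have := Fintype.ofFinite S
  have hT' := Set.toFinite T
  rw [conjProb_mul_card, Nat.subtype_card ({x | g ∈ conjBy H x} : Finset S)
    fun _ => Finset.mem_filter_univ _, mul_comm, ← Nat.cast_mul, Nat.cast_le,
    Set.ncard_eq_toFinset_card T]
  refine Finset.card_le_mul_card_image_of_maps_to (f := fun x : S => (x : G) * g * (x : G)⁻¹)
    (fun x hx => hT'.mem_toFinset.2 (hT x x.2 (Finset.mem_filter.1 hx).2)) _ fun t _ => ?_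
  obtain hempty | ⟨y, hy⟩ := Finset.eq_empty_or_nonempty
    (({x | g ∈ conjBy H x} : Finset S).filter fun x : S => (x : G) * g * (x : G)⁻¹ = t)
  · rw [hempty]
    exact Nat.zero_le _
  rw [← Nat.card_eq_finsetCard]
  refine Nat.card_le_card_of_injective
    (fun x => ⟨(y : G)⁻¹ * x.1, S.mul_mem (S.inv_mem y.2) x.1.2, ?_⟩) fun x x' hxx' => ?_
  · have hyx : (y : G) * g * (y : G)⁻¹ = x.1 * g * (x.1 : G)⁻¹ :=
      (Finset.mem_filter.1 hy).2.trans (Finset.mem_filter.1 x.2).2.symm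
    refine Subgroup.mem_centralizer_singleton_iff.2 ?_
    rw [eq_mul_inv_iff_mul_eq] at hyx
    rw [mul_assoc, ← hyx]
    group
  · exact Subtype.ext (Subtype.ext (mul_left_cancel (Subtype.mk.inj hxx')))

lemma two_mul_card_le_ncard_sdiff {Z K : Subgroup G} (hZK : Z ≤ K) (hK : Odd (Nat.card K))
    (hKZ : ¬ K ≤ Z) : 2 * Nat.card Z ≤ ((K : Set G) \ Z).ncard := by
  have hmul : Z.relIndex K * Nat.card Z = Nat.card K := by
    rw [← Subgroup.relIndex_bot_left, ← Subgroup.relIndex_bot_left, mul_comm,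
      Subgroup.relIndex_mul_relIndex _ _ _ bot_le hZK]
  have hodd : Odd (Z.relIndex K) := Nat.Odd.of_mul_left (hmul ▸ hK)
  have hne : Z.relIndex K ≠ 1 := fun h => hKZ (Subgroup.relIndex_eq_one.1 h)
  obtain ⟨k, hk⟩ := hodd
  have h3 : 3 * Nat.card Z ≤ Nat.card K := hmul ▸ Nat.mul_le_mul_right _ (by lia)
  have hsplit : ((K : Set G) \ Z).ncard + Nat.card Z = Nat.card K :=
    Set.ncard_sdiff_add_ncard_of_subset (SetLike.coe_subset_coe.2 hZK) (Set.toFinite _)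
  lia

end Finite

open scoped Classical in
/-- If all the intersections `K = H ∩ H^x ∩ H^y ∩ H^z` were bad, then each would have at least
`3|Z|` elements, hence at least `2|Z|` outside `Z`; average over all triples. -/
theorem exists_inf_conjBy_le [Fintype G] {S H Z : Subgroup G} (hH : Odd (Nat.card H))
    (hZH : Z ≤ H) (hZ : Z ≤ Subgroup.center G)
    (hsum : ∑ g with g ∈ H ∧ g ∉ Z, conjProb S H g ^ 3 < 2 * Nat.card Z) :
    ∃ x ∈ S, ∃ y ∈ S, ∃ z ∈ S, H ⊓ conjBy H x ⊓ conjBy H y ⊓ conjBy H z ≤ Z := by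
  by_contra! hbad
  let r (t : S × S × S) (g : {g // g ∈ H ∧ g ∉ Z}) : Prop :=
    g.1 ∈ conjBy H t.1 ∧ g.1 ∈ conjBy H t.2.1 ∧ g.1 ∈ conjBy H t.2.2
  have hlower (t : S × S × S) : 2 * Nat.card Z ≤ Nat.card {g // r t g} := by
    set K := H ⊓ conjBy H t.1 ⊓ conjBy H t.2.1 ⊓ conjBy H t.2.2
    have hmem (z : G) (hz : z ∈ Z) (x : G) : z ∈ conjBy H x := by
      rw [mem_conjBy, Subgroup.mem_center_iff.1 (hZ hz) x, mul_inv_cancel_right]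
      exact hZH hz
    have hZK : Z ≤ K := fun z hz =>
      ⟨⟨⟨hZH hz, hmem z hz _⟩, hmem z hz _⟩, hmem z hz _⟩
    have hK : Odd (Nat.card K) := hH.of_dvd_nat
      (Subgroup.card_dvd_of_le (inf_le_left.trans (inf_le_left.trans inf_le_left)))
    refine (two_mul_card_le_ncard_sdiff hZK hK (hbad _ t.1.2 _ t.2.1.2 _ t.2.2.2)).trans ?_
    rw [← Nat.card_coe_set_eq]
    exact Nat.card_le_card_of_injective
      (fun g => ⟨⟨g.1, g.2.1.1.1.1, g.2.2⟩, g.2.1.1.1.2, g.2.1.1.2, g.2.1.2⟩)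
      fun g g' h => Subtype.ext (congrArg (fun a => a.1.1) h)
  have hcount : (∑ t, Nat.card {g // r t g} : ℝ) =
      (∑ g with g ∈ H ∧ g ∉ Z, conjProb S H g ^ 3) * Nat.card S ^ 3 := by
    rw [← Nat.cast_sum, natCard_subtype_comm, Nat.cast_sum, Finset.sum_mul,
      Finset.sum_subtype (p := fun g => g ∈ H ∧ g ∉ Z) _ fun g => Finset.mem_filter_univ g]
    refine Finset.sum_congr rfl fun g _ => ?_
    rw [← mul_pow, conjProb_mul_card, ← Nat.cast_pow]
    exact congrArg _ (natCard_triple fun x : S => g.1 ∈ conjBy H x)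
  have htotal : ((Nat.card S : ℝ) ^ 3) * (2 * Nat.card Z) ≤ ∑ t, (Nat.card {g // r t g} : ℝ) := by
    refine le_trans (le_of_eq ?_) (Finset.sum_le_sum fun t _ => Nat.cast_le.2 (hlower t))
    rw [Finset.sum_const, Finset.card_univ, Fintype.card_prod, Fintype.card_prod,
      Nat.card_eq_fintype_card]
    simp only [nsmul_eq_mul, Nat.cast_mul, Nat.cast_ofNat]
    ring
  have hS : (0 : ℝ) < Nat.card S ^ 3 := by have := Nat.card_pos (α := S); positivity
  nlinarith

end RandomConjugates

lemma eq_one_of_sub_one_sq_eq_zero {F A : Type*} [Field F] [Ring A] [Algebra F A] {N : ℕ}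
    (hN : (N : F) ≠ 0) {a : A} (ha : (a - 1) * (a - 1) = 0) (haN : a ^ N = 1) : a = 1 := by
  have hpow (i : ℕ) : a ^ i * (a - 1) = a - 1 := by
    induction i with
    | zero => rw [pow_zero, one_mul]
    | succ i ih => rw [pow_succ', mul_assoc, ih, ← sub_eq_zero, ← sub_one_mul, ha]
  have hgeom := geom_sum_mul a N
  rw [Finset.sum_mul, Finset.sum_congr rfl fun i _ => hpow i, Finset.sum_const, Finset.card_range,
    haN, sub_self, ← Nat.cast_smul_eq_nsmul F, smul_eq_zero] at hgeom
  exact sub_eq_zero.1 (hgeom.resolve_left hN)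

section Exponent

variable {G : Type*} [Group G] {H : Subgroup G} {N : ℕ}

lemma dvd_of_prime_dvd_card [Finite H] (hH : ∀ h ∈ H, h ^ N = 1) {p : ℕ} (hp : p.Prime)
    (hpH : p ∣ Nat.card H) : p ∣ N := by
  have := Fact.mk hp
  obtain ⟨h, rfl⟩ := exists_prime_orderOf_dvd_card' p hpH
  exact orderOf_dvd_of_pow_eq_one (Subtype.ext (hH h h.2))

lemma odd_card_of_pow_eq_one [Finite H] (hN : Odd N) (hH : ∀ h ∈ H, h ^ N = 1) :
    Odd (Nat.card H) := by
  rw [← Nat.not_even_iff_odd, even_iff_two_dvd] at hN ⊢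
  exact fun h2 => hN (dvd_of_prime_dvd_card hH Nat.prime_two h2)

lemma card_cast_ne_zero_of_pow_eq_one {F : Type*} [Field F] [Finite H] (hN : (N : F) ≠ 0)
    (hH : ∀ h ∈ H, h ^ N = 1) : (Nat.card H : F) ≠ 0 := by
  obtain ⟨p, hp⟩ := CharP.exists F
  intro hcard
  rw [CharP.cast_eq_zero_iff F p] at hcard
  rcases CharP.char_is_prime_or_zero F p with hprime | rfl
  · exact hN ((CharP.cast_eq_zero_iff F p N).2 (dvd_of_prime_dvd_card hH hprime hcard))
  · exact Nat.card_pos.ne' (zero_dvd_iff.1 hcard)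

end Exponent

section Scalars

variable (F V : Type*) [Field F] [AddCommGroup V] [Module F V]

instance finite_linearEquiv [Finite V] : Finite (V ≃ₗ[F] V) := DFunLike.finite _

instance finite_linearMap [Finite V] {W : Type*} [AddCommGroup W] [Module F W] [Finite W] :
    Finite (V →ₗ[F] W) := DFunLike.finite _

/-- The special linear group of `V`, as a subgroup of its general linear group. -/
noncomputable def slSubgroup : Subgroup (V ≃ₗ[F] V) := (LinearEquiv.det (R := F) (M := V)).ker

/-- The group of scalar automorphisms of `V`. -/
def scalarSubgroup : Subgroup (V ≃ₗ[F] V) := (DistribMulAction.toModuleAut F V (S := Fˣ)).range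

variable {F V}

lemma mem_slSubgroup {g : V ≃ₗ[F] V} : g ∈ slSubgroup F V ↔ LinearEquiv.det g = 1 := Iff.rfl

lemma mem_scalarSubgroup {g : V ≃ₗ[F] V} :
    g ∈ scalarSubgroup F V ↔ ∃ c : F, ∀ v, g v = c • v := by
  constructor
  · rintro ⟨c, rfl⟩
    exact ⟨c, fun v => rfl⟩
  rintro ⟨c, hc⟩
  obtain hV | hV := subsingleton_or_nontrivial V
  · exact ⟨1, LinearEquiv.ext fun v => Subsingleton.elim _ _⟩
  obtain ⟨v, hv⟩ := exists_ne (0 : V)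
  have hc0 : c ≠ 0 := by
    rintro rfl
    exact hv (g.map_eq_zero_iff.1 ((hc v).trans (zero_smul F v)))
  exact ⟨Units.mk0 c hc0, LinearEquiv.ext fun v => (hc v).symm⟩

variable (F V)

lemma scalarSubgroup_le_center : scalarSubgroup F V ≤ Subgroup.center (V ≃ₗ[F] V) := by
  rintro _ ⟨c, rfl⟩
  exact Subgroup.mem_center_iff.2 fun g => LinearEquiv.ext fun v => map_smul g (c : F) v

lemma card_scalarSubgroup [Finite F] [Nontrivial V] :
    Nat.card (scalarSubgroup F V) = Nat.card F - 1 := by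
  have hinj : Function.Injective (DistribMulAction.toModuleAut F V (S := Fˣ)) := fun c d hcd => by
    obtain ⟨v, hv⟩ := exists_ne (0 : V)
    exact Units.ext (smul_left_injective F hv (LinearEquiv.congr_fun hcd v))
  rw [scalarSubgroup, Nat.card_congr (MonoidHom.ofInjective hinj).symm.toEquiv, Nat.card_units]

end Scalars

section DimensionTwo

variable {F V : Type*} [Field F] [AddCommGroup V] [Module F V]

lemma exists_linearIndependent_pair_apply {f : Module.End F V} (hf : ¬ ∃ c : F, f = c • 1) :
    ∃ v, LinearIndependent F ![v, f v] := by
  by_contra! h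
  exact hf (LinearMap.exists_eq_smul_id_of_forall_notLinearIndependent h)

lemma exists_eq_smul_one_add_smul_of_commute (hV : Module.finrank F V = 2) {f a : Module.End F V}
    (hf : ¬ ∃ c : F, f = c • 1) (ha : Commute a f) : ∃ x y : F, a = x • 1 + y • f := by
  obtain ⟨v, hv⟩ := exists_linearIndependent_pair_apply hf
  let b := basisOfLinearIndependentOfCardEqFinrank hv (by rw [Fintype.card_fin, hV])
  have hb0 : b 0 = v := by simp [b]
  have hb1 : b 1 = f v := by simp [b]
  obtain ⟨x, y, hav⟩ : ∃ x y : F, a v = x • v + y • f v :=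
    ⟨b.repr (a v) 0, b.repr (a v) 1, by
      rw [← hb1, ← hb0, ← Fin.sum_univ_two fun i => b.repr (a (b 0)) i • b i, b.sum_repr]⟩
  refine ⟨x, y, b.ext (Fin.forall_fin_two.2 ⟨?_, ?_⟩)⟩
  · rw [hb0]
    exact hav
  · calc a (b 1) = f (a v) := by rw [hb1]; exact congr($(ha.eq) v)
      _ = _ := by simp [hav, hb1]

lemma commute_of_commute_of_not_scalar (hV : Module.finrank F V = 2) {f a b : Module.End F V}
    (hf : ¬ ∃ c : F, f = c • 1) (ha : Commute a f) (hb : Commute b f) : Commute a b := by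
  obtain ⟨x, y, rfl⟩ := exists_eq_smul_one_add_smul_of_commute hV hf ha
  exact ((Commute.one_left b).smul_left x).add_left (hb.symm.smul_left y)

lemma mul_self_eq_of_finrank_eq_two (hV : Module.finrank F V = 2) (f : Module.End F V) :
    f * f = LinearMap.trace F V f • f - LinearMap.det f • 1 := by
  have : FiniteDimensional F V := .of_finrank_pos (by lia)
  let b := Module.finBasisOfFinrankEq F V hV
  have hcharpoly : f.charpoly = .X ^ 2 - .C (LinearMap.trace F V f) * .X +
      .C (LinearMap.det f) := by
    rw [← LinearMap.charpoly_toMatrix f b, Matrix.charpoly_fin_two, LinearMap.det_toMatrix,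
      LinearMap.trace_eq_matrix_trace F b]
  have hcayley := f.aeval_self_charpoly
  rw [hcharpoly] at hcayley
  simp only [map_add, map_sub, map_mul, map_pow, Polynomial.aeval_X, Polynomial.aeval_C,
    Algebra.algebraMap_eq_smul_one, smul_mul_assoc, one_mul] at hcayley
  rw [← sub_eq_zero, ← hcayley, sq]
  abel

variable {K : Type*} [Group K] [Finite K] {ρ : Representation F K V}

/-- Since `tr (k²) = (tr k)² - 2` on `SL₂`, and squaring permutes `K`, summing over `K` compares
the two dimensions. -/
lemma finrank_intertwiningMap_eq_of_det_eq_one (hV : Module.finrank F V = 2)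
    (hK : Odd (Nat.card K)) (hKF : (Nat.card K : F) ≠ 0) (hdet : ∀ k, LinearMap.det (ρ k) = 1) :
    (Module.finrank F (ρ.IntertwiningMap ρ) : F) = Module.finrank F ρ.invariants + 2 := by
  have : FiniteDimensional F V := .of_finrank_pos (by lia)
  have := Fintype.ofFinite K
  have := invertibleOfNonzero hKF
  have hsq (k : K) : ρ k * ρ k = ρ.character k • ρ k - 1 := by
    rw [mul_self_eq_of_finrank_eq_two hV, hdet, one_smul]; rfl
  have hone : LinearMap.trace F V 1 = 2 := by rw [LinearMap.trace_one, hV, Nat.cast_ofNat]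
  have htrace_sq (k : K) : ρ.character (k ^ 2) = ρ.character k * ρ.character k - 2 := by
    simp only [Representation.character, pow_two, map_mul, hsq, map_sub, map_smul, smul_eq_mul,
      hone]
  have htrace_inv (k : K) : ρ.character k⁻¹ = ρ.character k := by
    have hinv : ρ k⁻¹ = ρ.character k • 1 - ρ k := by
      have h := congrArg (ρ k⁻¹ * ·) (hsq k)
      simp only [mul_sub, mul_smul_comm, ← mul_assoc, ← map_mul, inv_mul_cancel, map_one, one_mul,
        mul_one] at h
      rw [h]; abel
    rw [Representation.character, hinv, map_sub, map_smul, hone, smul_eq_mul]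
    simp only [Representation.character]
    ring
  have hbij : Function.Bijective fun k : K => k ^ 2 :=
    Nat.Coprime.pow_left_bijective hK.coprime_two_right
  rw [← ρ.card_inv_mul_sum_char_mul_char_eq_finrank ρ, ← ρ.card_inv_mul_sum_char_eq_finrank,
    ← hbij.sum_comp ρ.character]
  simp only [htrace_inv, htrace_sq, Finset.sum_sub_distrib, Finset.sum_const, Finset.card_univ,
    nsmul_eq_mul, mul_sub, ← Nat.card_eq_fintype_card, inv_mul_cancel_left₀ hKF, sub_add_cancel]

lemma eq_one_of_apply_eq_self (hV : Module.finrank F V = 2) {N : ℕ} (hN : (N : F) ≠ 0)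
    {f : Module.End F V} (hdet : LinearMap.det f = 1) (hf : f ^ N = 1) {v : V} (hv : v ≠ 0)
    (hfv : f v = v) : f = 1 := by
  have hcayley := mul_self_eq_of_finrank_eq_two hV f
  rw [hdet, one_smul] at hcayley
  have htrace : LinearMap.trace F V f = 2 := by
    have h := congr($hcayley v)
    simp only [Module.End.mul_apply, hfv, LinearMap.sub_apply, LinearMap.smul_apply,
      Module.End.one_apply] at h
    refine smul_left_injective F hv ?_
    simp only [two_smul]
    exact (sub_eq_iff_eq_add.1 h.symm)
  refine eq_one_of_sub_one_sq_eq_zero hN ?_ hf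
  rw [htrace] at hcayley
  simp only [sub_mul, mul_sub, hcayley, one_mul, mul_one, two_smul]
  abel

/-- If the endomorphism algebra were one-dimensional, then `1 = dim V^K + 2` in `F` would give a
nonzero invariant vector and make the representation trivial. -/
lemma commute_of_det_eq_one (hV : Module.finrank F V = 2) (hK : Odd (Nat.card K))
    (hKF : (Nat.card K : F) ≠ 0) (hdet : ∀ k, LinearMap.det (ρ k) = 1) (a b : K) :
    Commute (ρ a) (ρ b) := by
  by_cases hscalar : ∀ f : ρ.IntertwiningMap ρ, ∃ c : F, f.toLinearMap = c • 1
  · have hend : Module.finrank F (ρ.IntertwiningMap ρ) = 1 := by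
      have : Nontrivial V := Module.nontrivial_of_finrank_pos (R := F) (by lia)
      have hid : Representation.IntertwiningMap.id ρ ≠ 0 := fun h => by
        obtain ⟨v, hv⟩ := exists_ne (0 : V)
        exact hv congr($h v)
      refine (finrank_eq_one_iff_of_nonzero' _ hid).2 fun f => ?_
      obtain ⟨c, hc⟩ := hscalar f
      exact ⟨c, Representation.IntertwiningMap.ext hc.symm⟩
    have hinv : ρ.invariants ≠ ⊥ := fun hbot => by
      have h := finrank_intertwiningMap_eq_of_det_eq_one hV hK hKF hdet
      rw [hend, hbot, finrank_bot] at h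
      push_cast at h
      exact one_ne_zero (α := F) (by linear_combination -h)
    obtain ⟨v, hv, hv0⟩ := Submodule.exists_mem_ne_zero_of_ne_bot hinv
    have htrivial (k : K) : ρ k = 1 :=
      eq_one_of_apply_eq_self hV hKF (hdet k) (by rw [← map_pow, pow_card_eq_one', map_one]) hv0
        (hv k)
    rw [htrivial a]
    exact Commute.one_left _
  · push Not at hscalar
    obtain ⟨f, hf⟩ := hscalar
    exact commute_of_commute_of_not_scalar hV (not_exists.2 hf) (f.isIntertwining' a).symm
      (f.isIntertwining' b).symm

/-- Twisting by a power of the determinant turns `H` into a representation with values in `SL₂`. -/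
theorem mul_comm_of_finrank_eq_two [Finite V] (hV : Module.finrank F V = 2) {N : ℕ}
    (hodd : Odd N) (hN : (N : F) ≠ 0) {H : Subgroup (V ≃ₗ[F] V)} (hH : ∀ h ∈ H, h ^ N = 1)
    {a b : V ≃ₗ[F] V} (ha : a ∈ H) (hb : b ∈ H) : a * b = b * a := by
  obtain ⟨k, hk⟩ := hodd
  let twist : (V ≃ₗ[F] V) →* (V ≃ₗ[F] V) :=
    { toFun g := DistribMulAction.toModuleAut F V (LinearEquiv.det g ^ k) * g
      map_one' := LinearEquiv.ext fun v => by simp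
      map_mul' g h := LinearEquiv.ext fun v => by
        simp [mul_pow, smul_smul, Units.smul_def, mul_comm] }
  let ρ : Representation F H V := LinearEquiv.automorphismGroup.toLinearMapMonoidHom.comp
    (twist.comp H.subtype)
  have hρ (h : H) : ρ h = (LinearEquiv.det h.1 ^ k : Fˣ) • (h.1 : Module.End F V) := rfl
  have hdet (h : H) : LinearMap.det (ρ h) = 1 := by
    rw [hρ, Units.smul_def, LinearMap.det_smul, hV, ← LinearEquiv.coe_det,
      ← Units.val_pow_eq_pow_val, ← Units.val_mul, ← pow_mul, ← pow_succ, mul_comm k, ← hk,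
      ← map_pow, hH h h.2, map_one, Units.val_one]
  have hcomm := commute_of_det_eq_one hV (odd_card_of_pow_eq_one ⟨k, hk⟩ hH)
    (card_cast_ne_zero_of_pow_eq_one hN hH) hdet ⟨a, ha⟩ ⟨b, hb⟩
  rw [hρ, hρ] at hcomm
  have hcomm' := hcomm.eq
  simp only [smul_mul_assoc, mul_smul_comm] at hcomm'
  rw [smul_comm, smul_left_cancel_iff, smul_left_cancel_iff] at hcomm'
  exact LinearEquiv.toLinearMap_injective hcomm'

end DimensionTwo

section Orders

/-- A bound for the order, modulo scalars, of a subgroup of `GL₂(q)` of odd order prime to `q`. For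
`q = 3` the value `q + 1 = 4` is replaced by `3`, since the order is odd. -/
def dimTwoBound (q : ℕ) : ℕ := if q = 3 then 3 else q + 1

/-- A bound for the order, modulo scalars, of a subgroup of `GLₙ(q)` of odd order prime to `q`. The
factor `q ^ i - 1` bounds the length of an orbit on the nonzero vectors of an `i`-dimensional space.
-/
def orderBound (q n : ℕ) : ℕ := dimTwoBound q * ∏ i ∈ Finset.Icc 3 n, (q ^ i - 1)

lemma orderBound_two (q : ℕ) : orderBound q 2 = dimTwoBound q := by simp [orderBound]

lemma orderBound_succ (q : ℕ) {n : ℕ} (hn : 2 ≤ n) :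
    orderBound q (n + 1) = (q ^ (n + 1) - 1) * orderBound q n := by
  rw [orderBound, orderBound, Finset.prod_Icc_succ_top (by lia)]
  ring

variable {F V : Type*} [Field F] [AddCommGroup V] [Module F V] {N : ℕ}

lemma exists_card_eq_of_apply_eq_self [Module.Finite F V] (hN : (N : F) ≠ 0)
    {K : Subgroup (V ≃ₗ[F] V)} (hK : ∀ k ∈ K, k ^ N = 1) {v : V} (hv : ∀ k ∈ K, k v = v) :
    ∃ K' : Subgroup ((V ⧸ F ∙ v) ≃ₗ[F] (V ⧸ F ∙ v)), (∀ k ∈ K', k ^ N = 1) ∧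
      Nat.card K' = Nat.card K ∧ (K ≤ slSubgroup F V → K' ≤ slSubgroup F (V ⧸ F ∙ v)) := by
  have hspan : ∀ k ∈ K, ∀ w ∈ F ∙ v, k w = w := fun k hk w hw => by
    obtain ⟨c, rfl⟩ := Submodule.mem_span_singleton.1 hw
    rw [map_smul, hv k hk]
  have hstab : K ≤ MulAction.stabilizer (V ≃ₗ[F] V) (F ∙ v) := fun k hk =>
    LinearEquiv.mem_stabilizer_submodule_of_le_fixedSubmodule fun w hw =>
      LinearMap.mem_fixedSubmodule_iff.2 (hspan k hk w hw)
  let φ := (LinearEquiv.reduce (F ∙ v)).comp (Subgroup.inclusion hstab)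
  have hφ : Function.Injective φ := (injective_iff_map_eq_one φ).2 fun k hk => by
    have hmem (w : V) : k.1 w - w ∈ F ∙ v :=
      (Submodule.Quotient.eq _).1 (LinearEquiv.congr_fun hk (Submodule.Quotient.mk w))
    refine Subtype.ext (LinearEquiv.toLinearMap_injective (eq_one_of_sub_one_sq_eq_zero hN
      (a := (k.1 : Module.End F V)) (LinearMap.ext fun w => sub_eq_zero.2 ?_) ?_))
    · exact hspan k k.2 _ (hmem w)
    · rw [← LinearEquiv.automorphismGroup.toLinearMapMonoidHom_apply, ← map_pow, hK k k.2, map_one]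
  refine ⟨φ.range, ?_, (Nat.card_congr (MonoidHom.ofInjective hφ).toEquiv).symm, fun hSL => ?_⟩
  · rintro _ ⟨k, rfl⟩
    rw [← map_pow, show k ^ N = 1 from Subtype.ext (hK k k.2), map_one]
  · rintro _ ⟨k, rfl⟩
    have hle : F ∙ v ≤ (F ∙ v).comap (k.1 : V →ₗ[F] V) := fun w hw => by
      rwa [Submodule.mem_comap, LinearEquiv.coe_coe, hspan k k.2 w hw]
    have hdet := LinearMap.det_eq_det_mul_det (F ∙ v) (k.1 : V →ₗ[F] V) hle
    have hrestrict : (k.1 : V →ₗ[F] V).restrict hle = LinearMap.id :=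
      LinearMap.ext fun w => Subtype.ext (hspan k k.2 w w.2)
    rw [hrestrict, LinearMap.det_id, one_mul, ← LinearEquiv.coe_det,
      mem_slSubgroup.1 (hSL k.2)] at hdet
    exact Units.ext ((LinearEquiv.coe_det _).trans hdet.symm)

lemma eq_one_of_mem_scalarSubgroup_of_apply_eq_self {k : V ≃ₗ[F] V}
    (hk : k ∈ scalarSubgroup F V) {v : V} (hv0 : v ≠ 0) (hv : k v = v) : k = 1 := by
  obtain ⟨c, hc⟩ := mem_scalarSubgroup.1 hk
  have hc1 : c = 1 := smul_left_injective F hv0 (by simp only [← hc v, hv, one_smul])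
  exact LinearEquiv.ext fun w => by rw [hc, hc1, one_smul, LinearEquiv.coe_one, id]

variable (F V) in
lemma scalarSubgroup_normal : (scalarSubgroup F V).Normal :=
  ⟨fun z hz g => by
    rwa [Subgroup.mem_center_iff.1 (scalarSubgroup_le_center F V hz), mul_inv_cancel_right]⟩

lemma card_inf_mul_relIndex {G : Type*} [Group G] (K H : Subgroup G) :
    Nat.card (K ⊓ H : Subgroup G) * K.relIndex H = Nat.card H := by
  rw [← K.inf_relIndex_right, ← Subgroup.relIndex_bot_left, ← Subgroup.relIndex_bot_left H,
    Subgroup.relIndex_mul_relIndex _ _ _ bot_le inf_le_right]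

lemma pow_mem_scalarSubgroup_of_mem_sup {H : Subgroup (V ≃ₗ[F] V)} (hH : ∀ h ∈ H, h ^ N = 1)
    {k : V ≃ₗ[F] V} (hk : k ∈ H ⊔ scalarSubgroup F V) : k ^ N ∈ scalarSubgroup F V := by
  have := scalarSubgroup_normal F V
  obtain ⟨h, hh, z, hz, rfl⟩ := Subgroup.mem_sup_of_normal_right.1 hk
  rw [Commute.mul_pow (Subgroup.mem_center_iff.1 (scalarSubgroup_le_center F V hz) h), hH h hh,
    one_mul]
  exact pow_mem hz N

lemma card_sup_scalarSubgroup (H : Subgroup (V ≃ₗ[F] V)) :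
    Nat.card (H ⊔ scalarSubgroup F V : Subgroup (V ≃ₗ[F] V)) =
      Nat.card (scalarSubgroup F V) * (scalarSubgroup F V).relIndex H := by
  have := scalarSubgroup_normal F V
  rw [← Subgroup.relIndex_sup_right, ← card_inf_mul_relIndex (scalarSubgroup F V),
    inf_eq_left.2 le_sup_right]

lemma finrank_quotient_span_singleton {v : V} (hv : v ≠ 0) {n : ℕ}
    (hV : Module.finrank F V = n + 1) : Module.finrank F (V ⧸ F ∙ v) = n := by
  have : FiniteDimensional F V := .of_finrank_pos (by lia)
  have h := Submodule.finrank_quotient_add_finrank (F ∙ v)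
  rw [hV, finrank_span_singleton hv] at h
  exact Nat.succ_injective h

variable [Finite V]

lemma inf_scalarSubgroup_eq_bot_of_finrank_eq_two (hV : Module.finrank F V = 2) (hodd : Odd N)
    {H : Subgroup (V ≃ₗ[F] V)} (hH : ∀ h ∈ H, h ^ N = 1) (hSL : H ≤ slSubgroup F V) :
    scalarSubgroup F V ⊓ H = ⊥ := by
  refine (Subgroup.eq_bot_iff_forall _).2 ?_
  rintro _ ⟨⟨c, rfl⟩, hcH⟩
  have hsq : c ^ 2 = 1 := by
    have hdet := congrArg Units.val (mem_slSubgroup.1 (hSL hcH))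
    have hc : ((DistribMulAction.toModuleAut F V c : V ≃ₗ[F] V) : V →ₗ[F] V) =
      (c : F) • LinearMap.id := rfl
    rw [LinearEquiv.coe_det, hc, LinearMap.det_smul, hV, LinearMap.det_id, mul_one] at hdet
    exact Units.ext hdet
  have hsq' := congrArg (DistribMulAction.toModuleAut F V) hsq
  rw [map_pow, map_one] at hsq'
  have hgcd := pow_gcd_eq_one.2 ⟨hsq', hH _ hcH⟩
  rwa [hodd.coprime_two_left, pow_one] at hgcd

lemma card_le_mul_card_stabilizer_inf [Finite F] (H : Subgroup (V ≃ₗ[F] V)) {v : V} (hv : v ≠ 0) :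
    Nat.card H ≤ (Nat.card F ^ Module.finrank F V - 1) *
      Nat.card (MulAction.stabilizer (V ≃ₗ[F] V) v ⊓ H : Subgroup (V ≃ₗ[F] V)) := by
  rw [← card_inf_mul_relIndex (MulAction.stabilizer (V ≃ₗ[F] V) v) H, mul_comm]
  gcongr
  have hindex : (MulAction.stabilizer (V ≃ₗ[F] V) v).relIndex H =
      (MulAction.orbit H v).ncard := MulAction.index_stabilizer H v
  rw [hindex, ← Module.natCard_eq_pow_finrank (K := F), ← Set.ncard_singleton (0 : V),
    ← Set.ncard_compl]
  refine Set.ncard_le_ncard ?_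
  rintro _ ⟨h, rfl⟩
  exact fun h0 => hv ((LinearEquiv.map_eq_zero_iff h.1).1 h0)

variable [Finite F]

lemma card_sup_scalarSubgroup_le_of_finrank_eq_two (hV : Module.finrank F V = 2) (hodd : Odd N)
    (hN : (N : F) ≠ 0) {H : Subgroup (V ≃ₗ[F] V)} (hH : ∀ h ∈ H, h ^ N = 1)
    (hHZ : ¬ H ≤ scalarSubgroup F V) :
    Nat.card (H ⊔ scalarSubgroup F V : Subgroup (V ≃ₗ[F] V)) ≤
      (Nat.card F - 1) * (Nat.card F + 1) := by
  have := scalarSubgroup_normal F V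
  have : Nontrivial V := Module.nontrivial_of_finrank_pos (R := F) (by lia)
  obtain ⟨g, hg, hgZ⟩ := SetLike.not_le_iff_exists.1 hHZ
  have hscalar : ¬ ∃ c : F, (g : Module.End F V) = c • 1 := fun ⟨c, hc⟩ =>
    hgZ (mem_scalarSubgroup.2 ⟨c, fun v => congr($hc v)⟩)
  have hcomm (k : (H ⊔ scalarSubgroup F V : Subgroup (V ≃ₗ[F] V))) :
      Commute (k.1 : Module.End F V) (g : Module.End F V) := by
    obtain ⟨h, hh, z, hz, hk⟩ := Subgroup.mem_sup_of_normal_right.1 k.2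
    have hzg : z * g = g * z := (Subgroup.mem_center_iff.1 (scalarSubgroup_le_center F V hz) g).symm
    have hhg : h * g = g * h := mul_comm_of_finrank_eq_two hV hodd hN hH hh hg
    exact congrArg LinearEquiv.toLinearMap (hk ▸ (Commute.mul_left hhg hzg).eq)
  choose x y hxy using fun k => exists_eq_smul_one_add_smul_of_commute hV hscalar (hcomm k)
  have hinj : Function.Injective fun k => (x k, y k) := fun k l hkl => by
    refine Subtype.ext (LinearEquiv.toLinearMap_injective ?_)
    obtain ⟨hx, hy⟩ := Prod.mk.inj hkl
    rw [hxy k, hxy l, hx, hy]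
  calc Nat.card (H ⊔ scalarSubgroup F V : Subgroup (V ≃ₗ[F] V))
      ≤ Nat.card ({0}ᶜ : Set (F × F)) :=
        Nat.card_le_card_of_injective (fun k => ⟨(x k, y k), fun h0 => ?_⟩)
          fun k l hkl => hinj (congrArg Subtype.val hkl)
    _ = (Nat.card F - 1) * (Nat.card F + 1) := by
        rw [Nat.card_coe_set_eq, Set.ncard_compl, Set.ncard_singleton, Nat.card_prod,
          mul_comm (_ - 1), ← Nat.mul_self_sub_mul_self_eq, mul_one]
  obtain ⟨v, hv⟩ := exists_ne (0 : V)
  have hk := hxy k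
  rw [(Prod.mk.inj h0).1, (Prod.mk.inj h0).2, zero_smul, zero_smul, add_zero] at hk
  exact hv ((LinearEquiv.map_eq_zero_iff k.1).1 congr($hk v))

lemma relIndex_scalarSubgroup_le_of_finrank_eq_two (hV : Module.finrank F V = 2) (hodd : Odd N)
    (hN : (N : F) ≠ 0) {H : Subgroup (V ≃ₗ[F] V)} (hH : ∀ h ∈ H, h ^ N = 1) :
    (scalarSubgroup F V).relIndex H ≤ dimTwoBound (Nat.card F) := by
  have : Nontrivial V := Module.nontrivial_of_finrank_pos (R := F) (by lia)
  have hF : 1 < Nat.card F := Finite.one_lt_card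
  have hle : (scalarSubgroup F V).relIndex H ≤ Nat.card F + 1 := by
    by_cases hHZ : H ≤ scalarSubgroup F V
    · rw [Subgroup.relIndex_eq_one.2 hHZ]
      lia
    · have hcard := card_sup_scalarSubgroup_le_of_finrank_eq_two hV hodd hN hH hHZ
      rw [card_sup_scalarSubgroup, card_scalarSubgroup] at hcard
      exact Nat.le_of_mul_le_mul_left hcard (by lia)
  rw [dimTwoBound]
  split_ifs with h3
  · have hoddIndex : Odd ((scalarSubgroup F V).relIndex H) :=
      (odd_card_of_pow_eq_one hodd hH).of_dvd_nat (Subgroup.relIndex_dvd_card _ _)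
    obtain ⟨k, hk⟩ := hoddIndex
    lia
  · exact hle

theorem relIndex_scalarSubgroup_le (hodd : Odd N) (hN : (N : F) ≠ 0) {n : ℕ}
    (hV : Module.finrank F V = n + 2) {H : Subgroup (V ≃ₗ[F] V)} (hH : ∀ h ∈ H, h ^ N = 1) :
    (scalarSubgroup F V).relIndex H ≤ orderBound (Nat.card F) (n + 2) := by
  have hF : 1 < Nat.card F := Finite.one_lt_card
  induction n generalizing V with
  | zero =>
    rw [orderBound_two]
    exact relIndex_scalarSubgroup_le_of_finrank_eq_two hV hodd hN hH
  | succ n ih =>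
    have : Nontrivial V := Module.nontrivial_of_finrank_pos (R := F) (by lia)
    obtain ⟨v, hv⟩ := exists_ne (0 : V)
    have := Finite.of_surjective _ (F ∙ v).mkQ_surjective
    have hquot := finrank_quotient_span_singleton hv hV
    have : Nontrivial (V ⧸ F ∙ v) := Module.nontrivial_of_finrank_pos (R := F) (by lia)
    obtain ⟨K', hK', hcard, -⟩ := exists_card_eq_of_apply_eq_self hN
      (K := MulAction.stabilizer (V ≃ₗ[F] V) v ⊓ (H ⊔ scalarSubgroup F V))
      (fun k hk => eq_one_of_mem_scalarSubgroup_of_apply_eq_self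
        (pow_mem_scalarSubgroup_of_mem_sup hH hk.2) hv (pow_mem hk.1 N)) (fun k hk => hk.1)
    refine Nat.le_of_mul_le_mul_left (?_ : (Nat.card F - 1) * _ ≤ (Nat.card F - 1) * _) (by lia)
    calc (Nat.card F - 1) * (scalarSubgroup F V).relIndex H
        = Nat.card (H ⊔ scalarSubgroup F V : Subgroup (V ≃ₗ[F] V)) := by
          rw [card_sup_scalarSubgroup, card_scalarSubgroup]
      _ ≤ (Nat.card F ^ (n + 3) - 1) * Nat.card K' := by
          rw [hcard, ← hV]
          exact card_le_mul_card_stabilizer_inf _ hv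
      _ ≤ (Nat.card F ^ (n + 3) - 1) * ((Nat.card F - 1) * orderBound (Nat.card F) (n + 2)) := by
          rw [← card_inf_mul_relIndex (scalarSubgroup F _) K', ← card_scalarSubgroup F (V ⧸ F ∙ v)]
          gcongr
          · exact Subgroup.card_le_of_le inf_le_left
          · exact ih hquot hK'
      _ = (Nat.card F - 1) * orderBound (Nat.card F) (n + 3) := by
          rw [orderBound_succ _ (by lia : 2 ≤ n + 2)]
          ring

theorem card_le_orderBound (hodd : Odd N) (hN : (N : F) ≠ 0) {n : ℕ}
    (hV : Module.finrank F V = n + 2) {H : Subgroup (V ≃ₗ[F] V)} (hH : ∀ h ∈ H, h ^ N = 1)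
    (hSL : H ≤ slSubgroup F V) : Nat.card H ≤ orderBound (Nat.card F) (n + 2) := by
  induction n generalizing V with
  | zero =>
    rw [← card_inf_mul_relIndex (scalarSubgroup F V) H,
      inf_scalarSubgroup_eq_bot_of_finrank_eq_two hV hodd hH hSL, Subgroup.card_bot, one_mul]
    exact relIndex_scalarSubgroup_le hodd hN hV hH
  | succ n ih =>
    have : Nontrivial V := Module.nontrivial_of_finrank_pos (R := F) (by lia)
    obtain ⟨v, hv⟩ := exists_ne (0 : V)
    have := Finite.of_surjective _ (F ∙ v).mkQ_surjective
    obtain ⟨K', hK', hcard, hSL'⟩ := exists_card_eq_of_apply_eq_self hN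
      (K := MulAction.stabilizer (V ≃ₗ[F] V) v ⊓ H) (fun k hk => hH k hk.2) (fun k hk => hk.1)
    calc Nat.card H
        ≤ (Nat.card F ^ (n + 3) - 1) * Nat.card K' := by
          rw [hcard, ← hV]
          exact card_le_mul_card_stabilizer_inf _ hv
      _ ≤ orderBound (Nat.card F) (n + 3) := by
          rw [orderBound_succ _ (by lia : 2 ≤ n + 2)]
          gcongr
          exact ih (finrank_quotient_span_singleton hv hV) hK' (hSL' (inf_le_right.trans hSL))

end Orders

section BlockTriangular

variable {F A B : Type*} [Field F] [AddCommGroup A] [Module F A] [AddCommGroup B] [Module F B]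

lemma skewProd_mul_skewProd (s s' : A ≃ₗ[F] A) (t t' : B ≃ₗ[F] B) (φ φ' : A →ₗ[F] B) :
    s.skewProd t φ * s'.skewProd t' φ' = (s * s').skewProd (t * t') (t ∘ₗ φ' + φ ∘ₗ s') := by
  ext x <;> simp [add_assoc]

lemma one_skewProd_one_zero : (1 : A ≃ₗ[F] A).skewProd (1 : B ≃ₗ[F] B) 0 = 1 := by
  ext x <;> simp

lemma skewProd_inv (s : A ≃ₗ[F] A) (t : B ≃ₗ[F] B) (φ : A →ₗ[F] B) :
    (s.skewProd t φ)⁻¹ =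
      s⁻¹.skewProd t⁻¹ (-((t⁻¹ : B ≃ₗ[F] B) ∘ₗ φ ∘ₗ (s⁻¹ : A ≃ₗ[F] A))) := by
  refine inv_eq_of_mul_eq_one_right ?_
  rw [skewProd_mul_skewProd, mul_inv_cancel, mul_inv_cancel, ← one_skewProd_one_zero]
  congr 1
  ext x
  simp

lemma skewProd_injective {s s' : A ≃ₗ[F] A} {t t' : B ≃ₗ[F] B} {φ φ' : A →ₗ[F] B}
    (h : s.skewProd t φ = s'.skewProd t' φ') : s = s' ∧ t = t' ∧ φ = φ' := by
  have hA (x : A) : s x = s' x ∧ φ x = φ' x := by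
    simpa using LinearEquiv.congr_fun h (x, 0)
  have hB (y : B) : t y = t' y := by simpa using LinearEquiv.congr_fun h (0, y)
  exact ⟨LinearEquiv.ext fun x => (hA x).1, LinearEquiv.ext hB, LinearMap.ext fun x => (hA x).2⟩

lemma exists_skewProd_pow (s : A ≃ₗ[F] A) (t : B ≃ₗ[F] B) (φ : A →ₗ[F] B) (k : ℕ) :
    ∃ ψ, s.skewProd t φ ^ k = (s ^ k).skewProd (t ^ k) ψ := by
  induction k with
  | zero => exact ⟨0, by simp only [pow_zero, one_skewProd_one_zero]⟩
  | succ k ih =>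
    obtain ⟨ψ, hψ⟩ := ih
    exact ⟨_, by rw [pow_succ, hψ, skewProd_mul_skewProd, ← pow_succ, ← pow_succ]⟩

lemma pow_eq_one_of_skewProd_pow_eq_one {s : A ≃ₗ[F] A} {t : B ≃ₗ[F] B} {φ : A →ₗ[F] B} {N : ℕ}
    (h : s.skewProd t φ ^ N = 1) : s ^ N = 1 ∧ t ^ N = 1 := by
  obtain ⟨ψ, hψ⟩ := exists_skewProd_pow s t φ N
  obtain ⟨hs, ht, -⟩ := skewProd_injective (hψ.symm.trans (h.trans one_skewProd_one_zero.symm))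
  exact ⟨hs, ht⟩

lemma det_skewProd [FiniteDimensional F A] [FiniteDimensional F B] (s : A ≃ₗ[F] A)
    (t : B ≃ₗ[F] B) (φ : A →ₗ[F] B) :
    LinearEquiv.det (s.skewProd t φ) = LinearEquiv.det s * LinearEquiv.det t := by
  let bA := Module.finBasis F A
  let bB := Module.finBasis F B
  refine Units.ext ?_
  rw [Units.val_mul, LinearEquiv.coe_det, LinearEquiv.coe_det, LinearEquiv.coe_det,
    ← LinearMap.det_toMatrix (bA.prod bB), ← LinearMap.det_toMatrix bA,
    ← LinearMap.det_toMatrix bB, ← Matrix.det_fromBlocks_zero₁₂ _ (LinearMap.toMatrix bA bB φ)]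
  congr 1
  ext (i | i) (j | j) <;> simp [LinearMap.toMatrix_apply]

/-- The group of pairs of diagonal blocks of the block triangular elements of `K`. -/
def diagonalBlocks (K : Subgroup ((A × B) ≃ₗ[F] A × B)) :
    Subgroup ((A ≃ₗ[F] A) × (B ≃ₗ[F] B)) where
  carrier := {p | ∃ φ, p.1.skewProd p.2 φ ∈ K}
  one_mem' := ⟨0, one_skewProd_one_zero (F := F) (A := A) (B := B) ▸ K.one_mem⟩
  mul_mem' := by
    rintro p p' ⟨φ, h⟩ ⟨φ', h'⟩
    exact ⟨_, skewProd_mul_skewProd _ _ _ _ φ φ' ▸ K.mul_mem h h'⟩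
  inv_mem' := by
    rintro p ⟨φ, h⟩
    exact ⟨_, skewProd_inv _ _ φ ▸ K.inv_mem h⟩

lemma mem_diagonalBlocks {K : Subgroup ((A × B) ≃ₗ[F] A × B)} {p : (A ≃ₗ[F] A) × (B ≃ₗ[F] B)} :
    p ∈ diagonalBlocks K ↔ ∃ φ, p.1.skewProd p.2 φ ∈ K := Iff.rfl

lemma pow_eq_one_of_mem_diagonalBlocks {K : Subgroup ((A × B) ≃ₗ[F] A × B)} {N : ℕ}
    (hK : ∀ k ∈ K, k ^ N = 1) {p : (A ≃ₗ[F] A) × (B ≃ₗ[F] B)} (hp : p ∈ diagonalBlocks K) :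
    p.1 ^ N = 1 ∧ p.2 ^ N = 1 :=
  let ⟨_, hφ⟩ := mem_diagonalBlocks.1 hp
  pow_eq_one_of_skewProd_pow_eq_one (hK _ hφ)

/-- Two block triangular elements with the same diagonal blocks differ by a unipotent element. -/
lemma skewProd_mem_unique {K : Subgroup ((A × B) ≃ₗ[F] A × B)} {N : ℕ} (hN : (N : F) ≠ 0)
    (hK : ∀ k ∈ K, k ^ N = 1) {s : A ≃ₗ[F] A} {t : B ≃ₗ[F] B} {φ φ' : A →ₗ[F] B}
    (h : s.skewProd t φ ∈ K) (h' : s.skewProd t φ' ∈ K) : φ = φ' := by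
  set u := s.skewProd t φ * (s.skewProd t φ')⁻¹ with hu
  have hu_apply (x : A × B) : u x = (x.1, x.2 + (φ (s⁻¹ x.1) - φ' (s⁻¹ x.1))) := by
    rw [hu, skewProd_inv, skewProd_mul_skewProd]
    ext <;> simp [sub_eq_neg_add]
  have hu_sq : ((u : (A × B) →ₗ[F] A × B) - 1) * ((u : (A × B) →ₗ[F] A × B) - 1) = 0 := by
    ext x <;> simp [hu_apply]
  have hu_pow : (u : (A × B) →ₗ[F] A × B) ^ N = 1 := by
    rw [← LinearEquiv.automorphismGroup.toLinearMapMonoidHom_apply, ← map_pow,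
      hK _ (K.mul_mem h (K.inv_mem h')), map_one]
  have hu_one : u = 1 :=
    LinearEquiv.toLinearMap_injective (eq_one_of_sub_one_sq_eq_zero hN hu_sq hu_pow)
  exact (skewProd_injective (mul_inv_eq_one.1 hu_one)).2.2

end BlockTriangular

section ConjugationTransfer

lemma conjBy_map {G G' : Type*} [Group G] [Group G'] (e : G ≃* G') (H : Subgroup G) {x g : G} :
    e g ∈ conjBy (H.map e.toMonoidHom) (e x) ↔ g ∈ conjBy H x := by
  simp only [mem_conjBy, ← map_mul, ← map_inv]
  exact Subgroup.mem_map_iff_mem e.injective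

lemma conjProb_map {G G' : Type*} [Group G] [Group G'] (e : G ≃* G') (S H : Subgroup G) (g : G) :
    conjProb (S.map e.toMonoidHom) (H.map e.toMonoidHom) (e g) = conjProb S H g := by
  have hS : Nat.card (S.map e.toMonoidHom) = Nat.card S :=
    Subgroup.card_map_of_injective e.injective
  have hcount : Nat.card {x : S.map e.toMonoidHom // e g ∈ conjBy (H.map e.toMonoidHom) x} =
      Nat.card {x : S // g ∈ conjBy H x} :=
    Nat.card_congr ((e.subgroupMap S).toEquiv.subtypeEquiv fun x => (conjBy_map e H).symm).symm
  rw [conjProb, conjProb, hS, hcount]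

variable {F V W : Type*} [Field F] [AddCommGroup V] [Module F V] [AddCommGroup W] [Module F W]

/-- Transport of automorphisms along a linear isomorphism. -/
def autConj (e : V ≃ₗ[F] W) : (V ≃ₗ[F] V) ≃* (W ≃ₗ[F] W) where
  toFun g := (e.symm.trans g).trans e
  invFun g := (e.trans g).trans e.symm
  left_inv g := by ext; simp
  right_inv g := by ext; simp
  map_mul' g h := by ext; simp

lemma autConj_apply (e : V ≃ₗ[F] W) (g : V ≃ₗ[F] V) (w : W) : autConj e g w = e (g (e.symm w)) :=
  rfl

lemma autConj_mem_slSubgroup (e : V ≃ₗ[F] W) {g : V ≃ₗ[F] V} :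
    autConj e g ∈ slSubgroup F W ↔ g ∈ slSubgroup F V := by
  rw [mem_slSubgroup, mem_slSubgroup, ← LinearEquiv.det_conj g e]
  rfl

lemma map_slSubgroup (e : V ≃ₗ[F] W) :
    (slSubgroup F V).map (autConj e).toMonoidHom = slSubgroup F W := by
  ext g
  obtain ⟨g, rfl⟩ := (autConj e).surjective g
  rw [autConj_mem_slSubgroup]
  exact Subgroup.mem_map_iff_mem (autConj e).injective

lemma pow_eq_one_of_mem_map {G G' : Type*} [Group G] [Group G'] (f : G →* G') {H : Subgroup G}
    {N : ℕ} (hH : ∀ h ∈ H, h ^ N = 1) : ∀ h ∈ H.map f, h ^ N = 1 := by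
  rintro _ ⟨h, hh, rfl⟩
  rw [← map_pow, hH h hh, map_one]

lemma pow_eq_one_of_mem_conjBy {G : Type*} [Group G] {H : Subgroup G} {N : ℕ}
    (hH : ∀ h ∈ H, h ^ N = 1) (x : G) : ∀ h ∈ conjBy H x, h ^ N = 1 :=
  pow_eq_one_of_mem_map _ hH

end ConjugationTransfer

section Decay

variable {F V W : Type*} [Field F] [AddCommGroup V] [Module F V] [AddCommGroup W] [Module F W]

/-- Every subgroup of exponent dividing `N` contains the random conjugate of `g` under the special
linear group with probability at most `q ^ (-x)`, where `q` is the order of the field. -/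
def ConjDecay (N : ℕ) (g : V ≃ₗ[F] V) (x : ℝ) : Prop :=
  ∀ H : Subgroup (V ≃ₗ[F] V), (∀ h ∈ H, h ^ N = 1) →
    conjProb (slSubgroup F V) H g ≤ (Nat.card F : ℝ) ^ (-x)

lemma ConjDecay.of_autConj {N : ℕ} {g : V ≃ₗ[F] V} {x : ℝ} (e : V ≃ₗ[F] W)
    (h : ConjDecay N (autConj e g) x) : ConjDecay N g x := fun H hH => by
  rw [← conjProb_map (autConj e), map_slSubgroup]
  exact h _ (pow_eq_one_of_mem_map _ hH)

lemma ConjDecay.mono [Finite F] {N : ℕ} {g : V ≃ₗ[F] V} {x y : ℝ} (h : ConjDecay N g y)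
    (hxy : x ≤ y) : ConjDecay N g x := fun H hH =>
  (h H hH).trans (Real.rpow_le_rpow_of_exponent_le (mod_cast Nat.card_pos)
    (neg_le_neg hxy))

lemma conjDecay_zero [Finite V] (N : ℕ) (g : V ≃ₗ[F] V) : ConjDecay N g 0 := fun H _ => by
  rw [neg_zero, Real.rpow_zero]
  exact conjProb_le_one _ _ _

end Decay

section BlockDecay

variable {F A B : Type*} [Field F] [AddCommGroup A] [Module F A] [AddCommGroup B] [Module F B]

lemma conj_skewProd_zero (a s : A ≃ₗ[F] A) (b t : B ≃ₗ[F] B) (φ : A →ₗ[F] B) :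
    s.skewProd t φ * a.skewProd b 0 * (s.skewProd t φ)⁻¹ =
      (s * a * s⁻¹).skewProd (t * b * t⁻¹)
        ((φ ∘ₗ a - (t * b * t⁻¹ : B ≃ₗ[F] B) ∘ₗ φ) ∘ₗ (s⁻¹ : A ≃ₗ[F] A)) := by
  rw [skewProd_inv, skewProd_mul_skewProd, skewProd_mul_skewProd]
  congr 1
  ext x
  simp [sub_eq_neg_add]

lemma skewProd_mem_slSubgroup [FiniteDimensional F A] [FiniteDimensional F B] {s : A ≃ₗ[F] A}
    {t : B ≃ₗ[F] B} (hs : s ∈ slSubgroup F A) (ht : t ∈ slSubgroup F B) (φ : A →ₗ[F] B) :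
    s.skewProd t φ ∈ slSubgroup F (A × B) := by
  rw [mem_slSubgroup] at hs ht ⊢
  rw [det_skewProd, hs, ht, mul_one]

/-- The space of linear maps intertwining `a` and `b`. -/
def intertwiners (a : A ≃ₗ[F] A) (b : B ≃ₗ[F] B) : Submodule F (A →ₗ[F] B) where
  carrier := {f | ∀ v, f (a v) = b (f v)}
  zero_mem' v := by simp
  add_mem' hf hg v := by simp [hf v, hg v]
  smul_mem' c f hf v := by simp [hf v]

/-- For fixed diagonal blocks `s`, `t`, the unipotent parts conjugating `a ⊕ b` into `K` lie in one
coset of the intertwiners. -/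
lemma card_conj_skewProd_mem_le [Finite A] [Finite B] {K : Subgroup ((A × B) ≃ₗ[F] A × B)} {N : ℕ}
    (hN : (N : F) ≠ 0) (hK : ∀ k ∈ K, k ^ N = 1) (a s : A ≃ₗ[F] A) (b t : B ≃ₗ[F] B) :
    Nat.card {φ : A →ₗ[F] B //
      s.skewProd t (t ∘ₗ φ) * a.skewProd b 0 * (s.skewProd t (t ∘ₗ φ))⁻¹ ∈ K} ≤
      Nat.card (intertwiners a b) := by
  obtain hempty | ⟨φ₀, hφ₀⟩ := isEmpty_or_nonempty {φ : A →ₗ[F] B //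
      s.skewProd t (t ∘ₗ φ) * a.skewProd b 0 * (s.skewProd t (t ∘ₗ φ))⁻¹ ∈ K}
  · rw [Nat.card_of_isEmpty]
    exact Nat.zero_le _
  refine Nat.card_le_card_of_injective (fun φ => ⟨φ.1 - φ₀, fun v => ?_⟩) fun φ φ' h =>
    Subtype.ext (sub_left_injective (Subtype.mk.inj h))
  have h := φ.2
  rw [conj_skewProd_zero] at h hφ₀
  have hv := LinearMap.congr_fun (skewProd_mem_unique hN hK h hφ₀) (s v)
  simp only [LinearMap.comp_apply, LinearMap.sub_apply, LinearEquiv.coe_coe,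
    LinearEquiv.mul_apply, ← map_sub] at hv
  rw [show s⁻¹ (s v) = v from s.symm_apply_apply v,
    show ∀ w, t⁻¹ (t w) = w from t.symm_apply_apply] at hv
  have hcomm := t.injective hv
  rwa [sub_eq_sub_iff_sub_eq_sub, show t⁻¹ (t _) = _ from t.symm_apply_apply _, ← map_sub b]
    at hcomm

lemma conj_mem_blocks_of_conj_skewProd_mem {K : Subgroup ((A × B) ≃ₗ[F] A × B)}
    {a s : A ≃ₗ[F] A} {b t : B ≃ₗ[F] B} {φ : A →ₗ[F] B}
    (h : s.skewProd t φ * a.skewProd b 0 * (s.skewProd t φ)⁻¹ ∈ K) :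
    a ∈ conjBy ((diagonalBlocks K).map (MonoidHom.fst _ _)) s ∧
      b ∈ conjBy ((diagonalBlocks K).map (MonoidHom.snd _ _)) t := by
  rw [conj_skewProd_zero] at h
  have hmem : (s * a * s⁻¹, t * b * t⁻¹) ∈ diagonalBlocks K := ⟨_, h⟩
  exact ⟨mem_conjBy.2 ⟨_, hmem, rfl⟩, mem_conjBy.2 ⟨_, hmem, rfl⟩⟩

lemma natCard_prod_subtype_le {α β : Type*} [Finite α] [Finite β] {p : α × β → Prop} {r : α → Prop}
    {k : ℕ} (hr : ∀ i, p i → r i.1) (hk : ∀ a, Nat.card {b // p (a, b)} ≤ k) :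
    Nat.card {i // p i} ≤ k * Nat.card {a // r a} := by
  have := Fintype.ofFinite {a // r a}
  have hinj := Nat.card_le_card_of_injective
    (fun i : {i // p i} => (⟨⟨i.1.1, hr i.1 i.2⟩, i.1.2, i.2⟩ :
      Σ a : {a // r a}, {b // p (a.1, b)})) fun i i' h =>
    Subtype.ext (congrArg (fun t : Σ a : {a // r a}, {b // p (a.1, b)} => (t.1.1, t.2.1)) h)
  rw [Nat.card_sigma] at hinj
  refine hinj.trans ((Finset.sum_le_sum fun a _ => hk a.1).trans_eq ?_)
  rw [Finset.sum_const, Finset.card_univ, smul_eq_mul, mul_comm, Nat.card_eq_fintype_card]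

lemma card_conj_skewProd_family_le [Finite A] [Finite B] {K : Subgroup ((A × B) ≃ₗ[F] A × B)}
    {N : ℕ} (hN : (N : F) ≠ 0) (hK : ∀ k ∈ K, k ^ N = 1) (a : A ≃ₗ[F] A) (b : B ≃ₗ[F] B) :
    Nat.card {i : (slSubgroup F A × slSubgroup F B) × (A →ₗ[F] B) //
      i.1.1.1.skewProd i.1.2.1 (i.1.2.1 ∘ₗ i.2) * a.skewProd b 0 *
        (i.1.1.1.skewProd i.1.2.1 (i.1.2.1 ∘ₗ i.2))⁻¹ ∈ K} ≤
      Nat.card (intertwiners a b) *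
        (Nat.card {s : slSubgroup F A //
            a ∈ conjBy ((diagonalBlocks K).map (MonoidHom.fst _ _)) s.1} *
          Nat.card {t : slSubgroup F B //
            b ∈ conjBy ((diagonalBlocks K).map (MonoidHom.snd _ _)) t.1}) := by
  rw [← Nat.card_prod, ← Nat.card_congr Equiv.subtypeProdEquivProd]
  exact natCard_prod_subtype_le (fun i hi => conj_mem_blocks_of_conj_skewProd_mem hi)
    fun p => card_conj_skewProd_mem_le hN hK a p.1 b p.2

lemma ConjDecay.card_conj_skewProd_family_le_mul_rpow [Finite F] [Finite A] [Finite B] {N : ℕ}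
    (hN : (N : F) ≠ 0) {a : A ≃ₗ[F] A} {b : B ≃ₗ[F] B} {x y : ℝ} (ha : ConjDecay N a x)
    (hb : ConjDecay N b y) {K : Subgroup ((A × B) ≃ₗ[F] A × B)} (hK : ∀ k ∈ K, k ^ N = 1) :
    (Nat.card {i : (slSubgroup F A × slSubgroup F B) × (A →ₗ[F] B) //
      i.1.1.1.skewProd i.1.2.1 (i.1.2.1 ∘ₗ i.2) * a.skewProd b 0 *
        (i.1.1.1.skewProd i.1.2.1 (i.1.2.1 ∘ₗ i.2))⁻¹ ∈ K} : ℝ) ≤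
      Nat.card (intertwiners a b) * (((Nat.card F : ℝ) ^ (-x) * Nat.card (slSubgroup F A)) *
        ((Nat.card F : ℝ) ^ (-y) * Nat.card (slSubgroup F B))) := by
  refine (Nat.cast_le.2 (card_conj_skewProd_family_le hN hK a b)).trans ?_
  push_cast
  rw [← conjProb_mul_card, ← conjProb_mul_card]
  have := conjProb_nonneg (slSubgroup F B) ((diagonalBlocks K).map (MonoidHom.snd _ _)) b
  gcongr
  · refine ha _ ?_
    rintro _ ⟨p, hp, rfl⟩
    exact (pow_eq_one_of_mem_diagonalBlocks hK hp).1
  · refine hb _ ?_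
    rintro _ ⟨p, hp, rfl⟩
    exact (pow_eq_one_of_mem_diagonalBlocks hK hp).2

theorem conjDecay_skewProd [Finite F] [Finite A] [Finite B] {N : ℕ} (hN : (N : F) ≠ 0)
    {a : A ≃ₗ[F] A} {b : B ≃ₗ[F] B} {x y : ℝ} (ha : ConjDecay N a x) (hb : ConjDecay N b y) {k : ℕ}
    (hk : Nat.card (intertwiners a b) ≤ Nat.card F ^ k) :
    ConjDecay N (a.skewProd b 0)
      (Module.finrank F A * Module.finrank F B - k + x + y) := by
  have := Fintype.ofFinite (slSubgroup F A)
  have := Fintype.ofFinite (slSubgroup F B)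
  have := Fintype.ofFinite (A →ₗ[F] B)
  have hq : (0 : ℝ) < Nat.card F := mod_cast Nat.card_pos
  intro H hH
  refine conjProb_le_of_average
    (fun i : (slSubgroup F A × slSubgroup F B) × (A →ₗ[F] B) =>
      ⟨i.1.1.1.skewProd i.1.2.1 (i.1.2.1 ∘ₗ i.2), skewProd_mem_slSubgroup i.1.1.2 i.1.2.2 _⟩)
    fun z => ?_
  have hK : ∀ k ∈ conjBy H z.1, k ^ N = 1 := pow_eq_one_of_mem_conjBy hH _
  refine (ha.card_conj_skewProd_family_le_mul_rpow hN hb hK).trans ?_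
  have hHom : Nat.card (A →ₗ[F] B) = Nat.card F ^ (Module.finrank F A * Module.finrank F B) := by
    rw [Module.natCard_eq_pow_finrank (K := F), Module.finrank_linearMap]
  have hexp : (Nat.card F : ℝ) ^ (-(Module.finrank F A * Module.finrank F B - k + x + y) : ℝ) *
      (Nat.card F : ℝ) ^ (Module.finrank F A * Module.finrank F B) =
      (Nat.card F : ℝ) ^ k * ((Nat.card F : ℝ) ^ (-x) * (Nat.card F : ℝ) ^ (-y)) := by
    simp only [← Real.rpow_natCast, ← Real.rpow_add hq]
    congr 1
    push_cast
    ring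
  have hk' : (Nat.card (intertwiners a b) : ℝ) ≤ (Nat.card F : ℝ) ^ k := mod_cast hk
  rw [Fintype.card_prod, Fintype.card_prod, ← Nat.card_eq_fintype_card, ← Nat.card_eq_fintype_card,
    ← Nat.card_eq_fintype_card, hHom]
  push_cast
  refine (mul_le_mul_of_nonneg_right hk' (by positivity)).trans_eq ?_
  calc _ = (Nat.card F : ℝ) ^ k * ((Nat.card F : ℝ) ^ (-x) * (Nat.card F : ℝ) ^ (-y)) *
        (Nat.card (slSubgroup F A) * Nat.card (slSubgroup F B)) := by ring
    _ = _ := by rw [← hexp]; ring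

end BlockDecay

section Irreducible

variable {F V : Type*} [Field F] [AddCommGroup V] [Module F V]

/-- The automorphism `g` has no invariant subspaces other than `⊥` and `⊤`. -/
def ActsIrreducibly (g : V ≃ₗ[F] V) : Prop :=
  ∀ P ∈ Module.End.invtSubmodule (g : Module.End F V), P = ⊥ ∨ P = ⊤

lemma ActsIrreducibly.eq_of_apply_eq {g : V ≃ₗ[F] V} (hg : ActsIrreducibly g)
    {a b : Module.End F V} (ha : Commute a g) (hb : Commute b g) {v : V} (hv : v ≠ 0)
    (hab : a v = b v) : a = b := by
  have hinv : LinearMap.ker (a - b) ∈ Module.End.invtSubmodule (g : Module.End F V) := by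
    intro w hw
    have hcomm := LinearMap.congr_fun (ha.sub_left hb).eq w
    rw [Module.End.mul_apply, Module.End.mul_apply, LinearMap.mem_ker.1 hw, map_zero] at hcomm
    exact hcomm
  have hne : LinearMap.ker (a - b) ≠ ⊥ := fun hbot =>
    hv ((Submodule.mem_bot F).1 (hbot ▸ LinearMap.mem_ker.2 (sub_eq_zero.2 hab)))
  exact sub_eq_zero.1 (LinearMap.ker_eq_top.1 ((hg _ hinv).resolve_left hne))

lemma mem_centralizer_iff_commute {g a : V ≃ₗ[F] V} :
    a ∈ Subgroup.centralizer {g} ↔ Commute (a : Module.End F V) g := by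
  rw [Subgroup.mem_centralizer_singleton_iff]
  exact (LinearEquiv.toLinearMap_injective (σ := RingHom.id F)).eq_iff.symm

lemma ActsIrreducibly.isSimpleModule_aeval [Nontrivial V] {g : V ≃ₗ[F] V}
    (hg : ActsIrreducibly g) :
    IsSimpleModule (Polynomial F) (Module.AEval' (g : V →ₗ[F] V)) where
  exists_pair_ne :=
    have := (Module.AEval'.of (g : V →ₗ[F] V)).injective.nontrivial
    exists_pair_ne _
  eq_bot_or_eq_top P := by
    let e := Module.AEval.mapSubmodule F V (g : Module.End F V)
    obtain ⟨Q, rfl⟩ := e.surjective P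
    refine (hg Q.1 Q.2).imp (fun h => ?_) fun h => ?_
    · rw [show Q = ⊥ from Subtype.ext h, map_bot]
    · rw [show Q = ⊤ from Subtype.ext h, map_top]

variable [Finite V] [Nontrivial V]

lemma ActsIrreducibly.card_centralizer_le {g : V ≃ₗ[F] V} (hg : ActsIrreducibly g) :
    Nat.card (Subgroup.centralizer {g}) ≤ Nat.card F ^ Module.finrank F V - 1 := by
  obtain ⟨v, hv⟩ := exists_ne (0 : V)
  have hcard : Nat.card ({0}ᶜ : Set V) = Nat.card F ^ Module.finrank F V - 1 := by
    rw [← Module.natCard_eq_pow_finrank (K := F) (V := V), Nat.card_coe_set_eq, Set.ncard_compl,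
      Set.ncard_singleton]
  rw [← hcard]
  refine Nat.card_le_card_of_injective
    (fun a => ⟨a.1 v, (LinearEquiv.map_ne_zero_iff a.1).2 hv⟩) fun a b hab =>
    Subtype.ext (LinearEquiv.toLinearMap_injective (hg.eq_of_apply_eq
      (mem_centralizer_iff_commute.1 a.2) (mem_centralizer_iff_commute.1 b.2) hv
      (Subtype.mk.inj hab)))

/-- `V` is one-dimensional over the finite field `F[g]`, and the determinant of an element of `F[g]`
is its norm. -/
lemma ActsIrreducibly.exists_det_eq {g : V ≃ₗ[F] V} (hg : ActsIrreducibly g) (c : Fˣ) :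
    ∃ a ∈ Subgroup.centralizer {g}, LinearEquiv.det a = c := by
  obtain ⟨I, hI, ⟨e⟩⟩ := isSimpleModule_iff_quot_maximal.1 hg.isSimpleModule_aeval
  let := Ideal.Quotient.field I
  let L : (Polynomial F ⧸ I) ≃ₗ[F] V :=
    (e.restrictScalars F).symm.trans (Module.AEval'.of (g : V →ₗ[F] V)).symm
  have hL (k : Polynomial F ⧸ I) : L (Ideal.Quotient.mk I Polynomial.X * k) = g (L k) := by
    have hX := e.symm.map_smul Polynomial.X k
    exact (congrArg _ hX).trans (Module.AEval'.of_symm_X_smul _ _)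
  have := Finite.of_equiv V L.symm.toEquiv
  obtain ⟨k, hk⟩ := FiniteField.norm_surjective F (Polynomial F ⧸ I) c
  have hk0 : k ≠ 0 := fun h0 => c.ne_zero (by rw [← hk, h0, Algebra.norm_zero])
  refine ⟨autConj L (DistribMulAction.toModuleAut F _ (Units.mk0 k hk0)),
    Subgroup.mem_centralizer_singleton_iff.2 (LinearEquiv.ext fun v => ?_), Units.ext ?_⟩
  · obtain ⟨l, rfl⟩ := L.surjective v
    simp only [LinearEquiv.mul_apply, autConj_apply, ← hL, L.symm_apply_apply]
    exact congrArg L (mul_left_comm k _ l)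
  · rw [← hk, Algebra.norm_apply]
    exact (congrArg Units.val (LinearEquiv.det_conj _ L)).trans (LinearEquiv.coe_det _)

lemma ActsIrreducibly.card_slSubgroup_inf_centralizer_mul_le {g : V ≃ₗ[F] V}
    (hg : ActsIrreducibly g) :
    Nat.card (slSubgroup F V ⊓ Subgroup.centralizer {g} : Subgroup (V ≃ₗ[F] V)) *
      (Nat.card F - 1) ≤ Nat.card F ^ Module.finrank F V - 1 := by
  have hmap : (Subgroup.centralizer {g}).map LinearEquiv.det = (⊤ : Subgroup Fˣ) :=
    top_unique fun c _ => Subgroup.mem_map.2 (hg.exists_det_eq c)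
  have hindex : (slSubgroup F V).relIndex (Subgroup.centralizer {g}) = Nat.card F - 1 := by
    rw [slSubgroup, Subgroup.relIndex_ker, hmap, Subgroup.card_top, Nat.card_units]
  rw [← hindex, card_inf_mul_relIndex]
  exact hg.card_centralizer_le

lemma ActsIrreducibly.conjProb_mul_card_le [Finite F] {g : V ≃ₗ[F] V} (hg : ActsIrreducibly g)
    {H : Subgroup (V ≃ₗ[F] V)} {T : Set (V ≃ₗ[F] V)}
    (hT : ∀ x ∈ slSubgroup F V, g ∈ conjBy H x → x * g * x⁻¹ ∈ T) :
    conjProb (slSubgroup F V) H g * Nat.card (V ≃ₗ[F] V) ≤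
      T.ncard * (Nat.card F ^ Module.finrank F V - 1 : ℕ) := by
  have hSL : Nat.card (V ≃ₗ[F] V) ≤ Nat.card (slSubgroup F V) * (Nat.card F - 1) := by
    rw [← (slSubgroup F V).card_mul_index, slSubgroup, Subgroup.index_ker, ← Nat.card_units]
    exact Nat.mul_le_mul_left _ (Subgroup.card_le_card_group _)
  calc conjProb (slSubgroup F V) H g * Nat.card (V ≃ₗ[F] V)
      ≤ conjProb (slSubgroup F V) H g * (Nat.card (slSubgroup F V) * (Nat.card F - 1 : ℕ)) :=
        mul_le_mul_of_nonneg_left (mod_cast hSL) (conjProb_nonneg _ _ _)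
    _ ≤ T.ncard * Nat.card (slSubgroup F V ⊓ Subgroup.centralizer {g} : Subgroup (V ≃ₗ[F] V)) *
          (Nat.card F - 1 : ℕ) := by
        rw [← mul_assoc]
        exact mul_le_mul_of_nonneg_right (_root_.conjProb_mul_card_le hT) (Nat.cast_nonneg _)
    _ ≤ T.ncard * (Nat.card F ^ Module.finrank F V - 1 : ℕ) := by
        rw [mul_assoc]
        gcongr
        exact_mod_cast hg.card_slSubgroup_inf_centralizer_mul_le

end Irreducible

section Cardinality

/-- The identification of invertible matrices with the automorphisms of the space of columns. -/
noncomputable def matrixAut (n : ℕ) (F : Type*) [Field F] :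
    GL (Fin n) F ≃* ((Fin n → F) ≃ₗ[F] (Fin n → F)) :=
  Matrix.GeneralLinearGroup.toLin.trans
    (LinearMap.GeneralLinearGroup.generalLinearEquiv F (Fin n → F))

lemma prod_pow_sub_pow (q n : ℕ) : ∏ i : Fin n, (q ^ n - q ^ (i : ℕ)) =
    q ^ (n * (n - 1) / 2) * ∏ i ∈ Finset.Icc 1 n, (q ^ i - 1) := by
  rw [Fin.prod_univ_eq_prod_range (fun i => q ^ n - q ^ i)]
  have hterm : ∀ i ∈ Finset.range n, q ^ n - q ^ i = q ^ i * (q ^ (n - 1 - i + 1) - 1) :=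
    fun i hi => by
      have := Finset.mem_range.1 hi
      rw [Nat.mul_sub, mul_one, ← pow_add, show i + (n - 1 - i + 1) = n by lia]
  rw [Finset.prod_congr rfl hterm, Finset.prod_mul_distrib, Finset.prod_pow_eq_pow_sum,
    Finset.sum_range_id, Finset.prod_range_reflect (fun i => q ^ (i + 1) - 1),
    Finset.range_eq_Ico, Finset.prod_Ico_add' (fun i => q ^ i - 1) 0 n 1]
  rfl

lemma prod_pow_sub_one_Icc_one (q n : ℕ) : ∏ i ∈ Finset.Icc 1 (n + 2), (q ^ i - 1) =
    (q - 1) * (q ^ 2 - 1) * ∏ i ∈ Finset.Icc 3 (n + 2), (q ^ i - 1) := by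
  have hIcc : Finset.Icc 1 (n + 2) = insert 1 (insert 2 (Finset.Icc 3 (n + 2))) := by
    ext i
    simp only [Finset.mem_insert, Finset.mem_Icc]
    lia
  rw [hIcc, Finset.prod_insert (by simp), Finset.prod_insert (by simp), pow_one, mul_assoc]

variable {F V : Type*} [Field F] [AddCommGroup V] [Module F V] [Finite V]

lemma card_linearEquiv [Finite F] : Nat.card (V ≃ₗ[F] V) =
    Nat.card F ^ (Module.finrank F V * (Module.finrank F V - 1) / 2) *
      ∏ i ∈ Finset.Icc 1 (Module.finrank F V), (Nat.card F ^ i - 1) := by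
  have := Fintype.ofFinite F
  rw [Nat.card_congr ((autConj (Module.finBasis F V).equivFun).trans (matrixAut _ F).symm).toEquiv,
    Matrix.card_GL_field, ← Nat.card_eq_fintype_card, prod_pow_sub_pow]

lemma ncard_det_eq_le {H : Subgroup (V ≃ₗ[F] V)} (d : Fˣ) :
    {h | h ∈ H ∧ LinearEquiv.det h = d}.ncard ≤
      Nat.card (H ⊓ slSubgroup F V : Subgroup (V ≃ₗ[F] V)) := by
  obtain hempty | ⟨k, hkH, hkd⟩ := {h | h ∈ H ∧ LinearEquiv.det h = d}.eq_empty_or_nonempty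
  · rw [hempty, Set.ncard_empty]
    exact Nat.zero_le _
  · refine Set.ncard_le_ncard_of_injOn (k⁻¹ * ·) (fun h hh => ?_) (mul_right_injective k⁻¹).injOn
    exact ⟨H.mul_mem (H.inv_mem hkH) hh.1,
      mem_slSubgroup.2 (by rw [map_mul, map_inv, hkd, hh.2, inv_mul_cancel])⟩

theorem ActsIrreducibly.conjProb_mul_le [Finite F] {N : ℕ} (hodd : Odd N) (hN : (N : F) ≠ 0) {n : ℕ}
    (hV : Module.finrank F V = n + 2) {H : Subgroup (V ≃ₗ[F] V)} (hH : ∀ h ∈ H, h ^ N = 1)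
    {g : V ≃ₗ[F] V} (hg : ActsIrreducibly g) :
    conjProb (slSubgroup F V) H g * (Nat.card F ^ ((n + 2) * (n + 1) / 2) *
      ((Nat.card F - 1) * (Nat.card F ^ 2 - 1)) : ℕ) ≤
      (dimTwoBound (Nat.card F) * (Nat.card F ^ (n + 2) - 1) : ℕ) := by
  have : Nontrivial V := Module.nontrivial_of_finrank_pos (R := F) (by lia)
  have hq : 1 < Nat.card F := Finite.one_lt_card
  set q := Nat.card F
  have hprod : (0 : ℝ) < (∏ i ∈ Finset.Icc 3 (n + 2), (q ^ i - 1) : ℕ) :=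
    mod_cast Finset.prod_pos fun i hi =>
      Nat.sub_pos_of_lt (Nat.one_lt_pow (by have := Finset.mem_Icc.1 hi; lia) hq)
  have hcard : Nat.card (V ≃ₗ[F] V) = q ^ ((n + 2) * (n + 1) / 2) * ((q - 1) * (q ^ 2 - 1)) *
      ∏ i ∈ Finset.Icc 3 (n + 2), (q ^ i - 1) := by
    rw [card_linearEquiv, hV, prod_pow_sub_one_Icc_one, ← mul_assoc]
    rfl
  have hT := hg.conjProb_mul_card_le (H := H)
    (T := {h | h ∈ H ∧ LinearEquiv.det h = LinearEquiv.det g})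
    fun x hx hgx => ⟨mem_conjBy.1 hgx, by
      rw [map_mul, map_mul, map_inv, mem_slSubgroup.1 hx, one_mul, inv_one, mul_one]⟩
  have hTle := (ncard_det_eq_le (H := H) (LinearEquiv.det g)).trans (card_le_orderBound hodd hN hV
    (fun h hh => hH h hh.1) inf_le_right)
  rw [hV] at hT
  refine le_of_mul_le_mul_right ?_ hprod
  calc _ = conjProb (slSubgroup F V) H g * Nat.card (V ≃ₗ[F] V) := by
        rw [hcard, mul_assoc, ← Nat.cast_mul]
    _ ≤ {h | h ∈ H ∧ LinearEquiv.det h = LinearEquiv.det g}.ncard * (q ^ (n + 2) - 1 : ℕ) := hT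
    _ ≤ orderBound q (n + 2) * (q ^ (n + 2) - 1 : ℕ) := by gcongr
    _ = _ := by
        rw [orderBound]
        push_cast
        ring

end Cardinality

section IrreducibleDecay

/-- The exponent `x` for which, in dimension `n` over the field of order `q`, a random conjugate of
an automorphism without large eigenspaces lies in a given subgroup of odd order prime to `q` with
probability at most `q ^ (-x)`. -/
noncomputable def decayRate (q n : ℕ) : ℝ := n * (n - if q = 2 then 2 else 1) / 4

lemma dimTwoBound_mul_rpow_le {q : ℕ} (hq : 3 ≤ q) :
    dimTwoBound q * (q : ℝ) ^ (3 / 2 : ℝ) ≤ ((q - 1) * (q ^ 2 - 1) : ℕ) := by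
  set t : ℝ := √q
  have ht : t ^ 2 = q := Real.sq_sqrt (Nat.cast_nonneg q)
  have hrpow : (q : ℝ) ^ (3 / 2 : ℝ) = t ^ 3 := by
    rw [← Real.rpow_natCast, show t = _ from Real.sqrt_eq_rpow _,
      ← Real.rpow_mul (Nat.cast_nonneg q)]
    norm_num
  rw [hrpow, dimTwoBound, Nat.cast_mul, Nat.cast_pred (by lia),
    Nat.cast_sub (Nat.one_le_pow _ _ (by lia)), Nat.cast_pow, ← ht]
  split_ifs with h3
  · have ht3 : t ^ 2 = 3 := ht.trans (by rw [h3]; norm_num)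
    have hle : t ≤ 16 / 9 := Real.sqrt_le_iff.2 ⟨by norm_num, by rw [← ht, ht3]; norm_num⟩
    rw [pow_succ t 2, ht3]
    norm_num
    linarith
  · have hq4 : (4 : ℝ) ≤ q := mod_cast (by lia : 4 ≤ q)
    have ht2 : 2 ≤ t := Real.le_sqrt_of_sq_le (by linarith)
    have hcube : t ^ 3 ≤ (t ^ 2 - 1) ^ 2 := by
      nlinarith [mul_nonneg (sq_nonneg t) (mul_nonneg (sub_nonneg.2 ht2) (by linarith : 0 ≤ t + 1))]
    push_cast
    rw [← ht]
    nlinarith [mul_le_mul_of_nonneg_left hcube (by positivity : 0 ≤ t ^ 2 + 1)]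

lemma le_rpow_neg_of_mul_rpow_le {q P a b x : ℝ} (hq : 1 < q) (h : P * q ^ a ≤ q ^ b)
    (hx : b + x ≤ a) : P ≤ q ^ (-x) := by
  have hq0 : 0 < q := one_pos.trans hq
  refine le_of_mul_le_mul_right (h.trans ?_) (Real.rpow_pos_of_pos hq0 a)
  rw [← Real.rpow_add hq0]
  exact Real.rpow_le_rpow_of_exponent_le hq.le (by linarith)

lemma cast_triangle (n : ℕ) : (((n + 2) * (n + 1) / 2 : ℕ) : ℝ) = (n + 2) * (n + 1) / 2 := by
  rw [Nat.cast_div (mul_comm (n + 2) (n + 1) ▸ (Nat.even_mul_succ_self (n + 1)).two_dvd)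
    two_ne_zero]
  push_cast
  rfl

variable {F V : Type*} [Field F] [AddCommGroup V] [Module F V] [Finite F] [Finite V] {N : ℕ}

lemma ActsIrreducibly.conjDecay_of_three_le (hodd : Odd N) (hN : (N : F) ≠ 0)
    (hq : 3 ≤ Nat.card F) {n : ℕ} (hV : Module.finrank F V = n + 2) {g : V ≃ₗ[F] V}
    (hg : ActsIrreducibly g) : ConjDecay N g (decayRate (Nat.card F) (n + 2)) := fun H hH => by
  have h := hg.conjProb_mul_le hodd hN hV hH
  have hbound := dimTwoBound_mul_rpow_le hq
  set q := Nat.card F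
  set P := conjProb (slSubgroup F V) H g
  have hP : 0 ≤ P := conjProb_nonneg _ _ _
  have hq1 : (1 : ℝ) < q := mod_cast (by lia : 1 < q)
  have hd : (0 : ℝ) < dimTwoBound q := by
    rw [dimTwoBound]
    split_ifs <;> positivity
  refine le_rpow_neg_of_mul_rpow_le (a := (n + 2) * (n + 1) / 2 + 3 / 2) (b := (n + 2 : ℕ)) hq1
    ?_ ?_
  · refine le_of_mul_le_mul_left ?_ hd
    calc dimTwoBound q * (P * (q : ℝ) ^ ((n + 2) * (n + 1) / 2 + 3 / 2 : ℝ))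
        = P * (q ^ ((n + 2) * (n + 1) / 2) * (dimTwoBound q * (q : ℝ) ^ (3 / 2 : ℝ))) := by
          rw [Real.rpow_add (by linarith), ← cast_triangle, Real.rpow_natCast]
          ring
      _ ≤ P * (q ^ ((n + 2) * (n + 1) / 2) * ((q - 1) * (q ^ 2 - 1) : ℕ)) := by gcongr
      _ ≤ (dimTwoBound q * (q ^ (n + 2) - 1) : ℕ) := mod_cast h
      _ ≤ dimTwoBound q * (q : ℝ) ^ ((n + 2 : ℕ) : ℝ) := by
          rw [Real.rpow_natCast]
          exact_mod_cast Nat.mul_le_mul_left _ (Nat.sub_le _ _)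
  · rw [decayRate, if_neg (by lia)]
    push_cast
    have hn : (0 : ℝ) ≤ n * (n - 1) := by
      obtain _ | m := n
      · simp
      · rw [Nat.cast_add_one, add_sub_cancel_right]
        positivity
    linarith

lemma ActsIrreducibly.conjDecay_of_card_eq_two (hodd : Odd N) (hN : (N : F) ≠ 0)
    (hq : Nat.card F = 2) {n : ℕ} (hV : Module.finrank F V = n + 4) {g : V ≃ₗ[F] V}
    (hg : ActsIrreducibly g) : ConjDecay N g (decayRate 2 (n + 4)) := fun H hH => by
  have h := hg.conjProb_mul_le hodd hN (n := n + 2) hV hH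
  rw [hq, Nat.cast_two]
  set P := conjProb (slSubgroup F V) H g
  refine le_rpow_neg_of_mul_rpow_le (a := (n + 4) * (n + 3) / 2) (b := (n + 4 : ℕ)) one_lt_two ?_ ?_
  · have hexp : ((n + 4) * (n + 3) / 2 : ℝ) = ((n + 2 + 2) * (n + 2 + 1) / 2 : ℕ) := by
      rw [cast_triangle]
      push_cast
      ring
    rw [hexp, Real.rpow_natCast, Real.rpow_natCast]
    rw [hq, dimTwoBound, if_neg (by norm_num)] at h
    push_cast [Nat.one_le_two_pow] at h
    linarith
  · rw [decayRate, if_pos rfl]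
    push_cast
    nlinarith [(n.cast_nonneg : (0 : ℝ) ≤ n)]

end IrreducibleDecay

section CharTwo

variable {F V : Type*} [Field F] [AddCommGroup V] [Module F V] {N : ℕ}

lemma eq_one_of_card_eq_two (hq : Nat.card F = 2) {c : F} (hc : c ≠ 0) : c = 1 := by
  have := Nat.finite_of_card_ne_zero (hq.trans_ne two_ne_zero)
  have : Subsingleton Fˣ := Finite.card_le_one_iff_subsingleton.1 (by rw [Nat.card_units, hq])
  exact congrArg Units.val (Subsingleton.elim (Units.mk0 c hc) 1)

lemma finrank_eigenspace_one_le (hq : Nat.card F = 2) (hN : (N : F) ≠ 0) {n : ℕ}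
    (hV : Module.finrank F V = n + 2) {g : V ≃ₗ[F] V} (hg : g ^ N = 1) (hg1 : g ≠ 1) :
    Module.finrank F (Module.End.eigenspace (g : Module.End F V) 1) ≤ n := by
  have : FiniteDimensional F V := .of_finrank_pos (by lia)
  by_contra! hlt
  have hker : Module.End.eigenspace (g : Module.End F V) 1 =
      LinearMap.ker ((g : Module.End F V) - 1) := by
    rw [Module.End.eigenspace_def, one_smul]
  have hrank := LinearMap.finrank_range_add_finrank_ker ((g : Module.End F V) - 1)
  rw [← hker] at hrank
  obtain ⟨w, hw⟩ := (finrank_le_one_iff (K := F)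
    (V := LinearMap.range ((g : Module.End F V) - 1))).1 (by lia)
  have hsub (v : V) : ∃ c : F, c • w.1 = g v - v :=
    (hw ⟨_, v, rfl⟩).imp fun c => congrArg Subtype.val
  have hfix : g w - w.1 = 0 := by
    obtain ⟨c, hc⟩ := hsub w
    obtain rfl | hc0 := eq_or_ne c 0
    · rw [← hc, zero_smul]
    · rw [eq_one_of_card_eq_two hq hc0, one_smul, eq_sub_iff_add_eq] at hc
      have htwo : (1 : F) + 1 = 0 := by
        by_contra h
        exact one_ne_zero (add_eq_left.1 (eq_one_of_card_eq_two hq h))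
      rw [← one_smul F w.1, ← add_smul, htwo, zero_smul, one_smul] at hc
      rw [(LinearEquiv.map_eq_zero_iff g).1 hc.symm, map_zero, sub_zero]
  refine hg1 (LinearEquiv.toLinearMap_injective (eq_one_of_sub_one_sq_eq_zero hN
    (a := (g : Module.End F V)) (LinearMap.ext fun v => ?_) ?_))
  · obtain ⟨c, hc⟩ := hsub v
    change g (g v - v) - (g v - v) = 0
    rw [← hc, map_smul, ← smul_sub, hfix, smul_zero]
  · rw [← LinearEquiv.automorphismGroup.toLinearMapMonoidHom_apply, ← map_pow, hg, map_one]

lemma ActsIrreducibly.eq_zero_of_apply_eq (hV : 2 ≤ Module.finrank F V) {g : V ≃ₗ[F] V}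
    (hg : ActsIrreducibly g) {v : V} (hv : g v = v) : v = 0 := by
  have hinv : F ∙ v ∈ Module.End.invtSubmodule (g : Module.End F V) := by
    rw [Module.End.mem_invtSubmodule, Submodule.span_singleton_le_iff_mem]
    exact Submodule.mem_comap.2 (hv.symm ▸ Submodule.mem_span_singleton_self v)
  refine Submodule.span_singleton_eq_bot.1 ((hg _ hinv).resolve_right fun htop => ?_)
  have hle := finrank_span_le_card (R := F) ({v} : Set V)
  rw [htop, finrank_top, Set.toFinset_singleton, Finset.card_singleton] at hle
  lia

variable [Finite V]

lemma card_fixedBy_add_ite_le (hq : Nat.card F = 2) (hN : (N : F) ≠ 0)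
    (hV : Module.finrank F V = 3) {h : V ≃ₗ[F] V} (hh : h ^ N = 1)
    [Decidable (∀ v, h v = v → v = 0)] [Decidable (h = 1)] :
    Nat.card (MulAction.fixedBy V h) + (if ∀ v, h v = v → v = 0 then 1 else 0) ≤
      2 + if h = 1 then 6 else 0 := by
  have : Nontrivial V := Module.nontrivial_of_finrank_pos (R := F) (by lia)
  have hfix : Nat.card (MulAction.fixedBy V h) =
      2 ^ Module.finrank F (Module.End.eigenspace (h : Module.End F V) 1) := by
    rw [← hq, ← Module.natCard_eq_pow_finrank (K := F)]
    exact Nat.card_congr (Equiv.subtypeEquivRight fun v => by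
      rw [Module.End.mem_eigenspace_iff, one_smul]; rfl)
  rw [hfix]
  split_ifs with hfpf h1 h1
  · obtain ⟨v, hv⟩ := exists_ne (0 : V)
    exact absurd (hfpf v (by rw [h1]; rfl)) hv
  · have hbot : Module.End.eigenspace (h : Module.End F V) 1 = ⊥ :=
      (Submodule.eq_bot_iff _).2 fun v hv => hfpf v (by simpa using hv)
    rw [hbot, finrank_bot]
    norm_num
  · have hle := Submodule.finrank_le (Module.End.eigenspace (h : Module.End F V) 1)
    rw [hV] at hle
    exact Nat.pow_le_pow_right two_pos hle
  · exact Nat.pow_le_pow_right two_pos (finrank_eigenspace_one_le hq hN hV hh h1)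

lemma ncard_fixedPointFree_le (hq : Nat.card F = 2) (hN : (N : F) ≠ 0)
    (hV : Module.finrank F V = 3) {H : Subgroup (V ≃ₗ[F] V)} (hH : ∀ h ∈ H, h ^ N = 1) :
    {h | h ∈ H ∧ ∀ v, h v = v → v = 0}.ncard ≤ 6 := by
  classical
  have := Fintype.ofFinite H
  have := Fintype.ofFinite V
  have : Nontrivial V := Module.nontrivial_of_finrank_pos (R := F) (by lia)
  have hle (h : H) : Fintype.card (MulAction.fixedBy V h) +
      (if ∀ v, h.1 v = v → v = 0 then 1 else 0) ≤ 2 + if h = 1 then 6 else 0 := by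
    rw [← Nat.card_eq_fintype_card]
    have hbound := card_fixedBy_add_ite_le hq hN hV (hH h h.2)
    simp only [OneMemClass.coe_eq_one] at hbound
    exact hbound
  have horbits : 2 ≤ Fintype.card (Quotient (MulAction.orbitRel H V)) := by
    obtain ⟨v, hv⟩ := exists_ne (0 : V)
    refine Fintype.one_lt_card_iff.2 ⟨Quotient.mk _ v, Quotient.mk _ 0, fun h => ?_⟩
    obtain ⟨k, hk⟩ := MulAction.orbitRel_apply.1 (Quotient.exact h)
    exact hv (hk.symm.trans (smul_zero k))
  have hburnside := MulAction.sum_card_fixedBy_eq_card_orbits_mul_card_group H V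
  have hsum := Finset.sum_le_sum fun h (_ : h ∈ Finset.univ) => hle h
  rw [Finset.sum_add_distrib, Finset.sum_add_distrib, hburnside, ← Finset.card_filter,
    Finset.sum_ite_eq', if_pos (Finset.mem_univ _), Finset.sum_const, Finset.card_univ,
    smul_eq_mul] at hsum
  have hcount : {h | h ∈ H ∧ ∀ v, h v = v → v = 0}.ncard =
      (Finset.univ.filter fun h : H => ∀ v, h.1 v = v → v = 0).card := by
    rw [← Set.ncard_coe_finset, ← Set.ncard_image_of_injective _ Subtype.val_injective]
    congr 1
    ext h
    simp [and_comm]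
  rw [hcount]
  have := Nat.mul_le_mul_right (Fintype.card H) horbits
  lia

lemma ActsIrreducibly.conjDecay_two (hq : Nat.card F = 2) (hN : (N : F) ≠ 0)
    (hV : Module.finrank F V = 3) {g : V ≃ₗ[F] V} (hg : ActsIrreducibly g) : ConjDecay N g 2 := by
  have := Nat.finite_of_card_ne_zero (hq.trans_ne two_ne_zero)
  have : Nontrivial V := Module.nontrivial_of_finrank_pos (R := F) (by lia)
  intro H hH
  have hT (x : V ≃ₗ[F] V) (_ : x ∈ slSubgroup F V) (hgx : g ∈ conjBy H x) :
      x * g * x⁻¹ ∈ {h | h ∈ H ∧ ∀ v, h v = v → v = 0} := by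
    refine ⟨mem_conjBy.1 hgx, fun v hv => x⁻¹.map_eq_zero_iff.1 ?_⟩
    exact hg.eq_zero_of_apply_eq (hV.symm ▸ by norm_num) (x.eq_symm_apply.2 hv)
  have h := hg.conjProb_mul_card_le hT
  have hcard : Nat.card (V ≃ₗ[F] V) = 168 := by
    rw [card_linearEquiv, hV, hq]
    rfl
  have hT6 : ({h | h ∈ H ∧ ∀ v, h v = v → v = 0}.ncard : ℝ) ≤ 6 :=
    mod_cast ncard_fixedPointFree_le hq hN hV hH
  rw [hcard, hV, hq] at h
  rw [hq]
  norm_num at h ⊢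
  linarith

end CharTwo

section Restriction

variable {F V : Type*} [Field F] [AddCommGroup V] [Module F V] {N : ℕ}

lemma exists_mem_invtSubmodule_isCompl (hN : (N : F) ≠ 0) {g : V ≃ₗ[F] V} (hg : g ^ N = 1)
    {P : Submodule F V} (hP : P ∈ Module.End.invtSubmodule (g : Module.End F V)) :
    ∃ Q ∈ Module.End.invtSubmodule (g : Module.End F V), IsCompl P Q := by
  refine Module.End.isSemisimple_iff.1 (Module.End.isSemisimple_of_squarefree_aeval_eq_zero
    (p := Polynomial.X ^ N - 1) ?_ ?_) P hP
  · exact (Polynomial.separable_X_pow_sub_C 1 hN one_ne_zero).squarefree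
  · rw [map_sub, map_pow, Polynomial.aeval_X, map_one,
      ← LinearEquiv.automorphismGroup.toLinearMapMonoidHom_apply, ← map_pow, hg, map_one, sub_self]

lemma eigenspace_mem_invtSubmodule (g : V ≃ₗ[F] V) (c : F) :
    Module.End.eigenspace (g : Module.End F V) c ∈
      Module.End.invtSubmodule (g : Module.End F V) := fun v hv =>
  Module.End.mem_eigenspace_iff.2 <| by
    rw [Module.End.mem_eigenspace_iff.1 hv, map_smul, Module.End.mem_eigenspace_iff.1 hv]

lemma ActsIrreducibly.card_intertwiners_le {A B : Type*} [AddCommGroup A] [Module F A]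
    [AddCommGroup B] [Module F B] [Nontrivial A] [Finite B] {a : A ≃ₗ[F] A}
    (ha : ActsIrreducibly a) (b : B ≃ₗ[F] B) :
    Nat.card (intertwiners a b) ≤ Nat.card F ^ Module.finrank F B := by
  obtain ⟨v, hv⟩ := exists_ne (0 : A)
  rw [← Module.natCard_eq_pow_finrank (K := F) (V := B)]
  refine Nat.card_le_card_of_injective (fun f => f.1 v) fun f f' hff' => sub_eq_zero.1 ?_
  have hker : LinearMap.ker (f - f').1 ∈ Module.End.invtSubmodule (a : Module.End F A) := by
    intro w hw
    rw [Submodule.mem_comap, LinearMap.mem_ker]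
    exact ((f - f').2 w).trans (by rw [LinearMap.mem_ker.1 hw, map_zero])
  refine Subtype.ext (LinearMap.ker_eq_top.1 ((ha _ hker).resolve_left fun hbot => hv ?_))
  rw [← Submodule.mem_bot F, ← hbot]
  exact sub_eq_zero.2 hff'

variable [FiniteDimensional F V]

/-- The automorphism induced by `g` on an invariant subspace. -/
noncomputable def restrictAut (g : V ≃ₗ[F] V) {P : Submodule F V}
    (hP : P ∈ Module.End.invtSubmodule (g : Module.End F V)) : P ≃ₗ[F] P :=
  .ofInjectiveEndo ((g : Module.End F V).restrict hP) fun _ _ h =>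
    Subtype.ext (g.injective (congrArg Subtype.val h))

variable {g : V ≃ₗ[F] V} {P Q : Submodule F V}
  (hP : P ∈ Module.End.invtSubmodule (g : Module.End F V))
  (hQ : Q ∈ Module.End.invtSubmodule (g : Module.End F V))

lemma coe_restrictAut_apply (v : P) : (restrictAut g hP v : V) = g v := rfl

lemma restrictAut_pow_eq_one (hg : g ^ N = 1) : restrictAut g hP ^ N = 1 := by
  have hpow (k : ℕ) (v : P) : ((restrictAut g hP ^ k) v : V) = (g ^ k) v := by
    induction k with
    | zero => rfl
    | succ k ih =>
      rw [pow_succ', pow_succ', LinearEquiv.mul_apply, LinearEquiv.mul_apply,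
        coe_restrictAut_apply, ih]
  ext v
  rw [hpow, hg]
  rfl

lemma map_subtype_eigenspace_restrictAut (c : F) :
    (Module.End.eigenspace (restrictAut g hP : Module.End F P) c).map P.subtype =
      Module.End.eigenspace (g : Module.End F V) c ⊓ P := by
  ext v
  simp only [Submodule.mem_map, Submodule.mem_inf, Module.End.mem_eigenspace_iff]
  constructor
  · rintro ⟨w, hw, rfl⟩
    exact ⟨congrArg Subtype.val hw, w.2⟩
  · rintro ⟨hv, hvP⟩
    exact ⟨⟨v, hvP⟩, Subtype.ext hv, rfl⟩

lemma finrank_eigenspace_restrictAut (c : F) :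
    Module.finrank F (Module.End.eigenspace (restrictAut g hP : Module.End F P) c) =
      Module.finrank F (Module.End.eigenspace (g : Module.End F V) c ⊓ P : Submodule F V) := by
  rw [← map_subtype_eigenspace_restrictAut hP, Submodule.finrank_map_subtype_eq]

lemma finrank_eigenspace_restrictAut_le (c : F) :
    Module.finrank F (Module.End.eigenspace (restrictAut g hP : Module.End F P) c) ≤
      Module.finrank F (Module.End.eigenspace (g : Module.End F V) c) :=
  (finrank_eigenspace_restrictAut hP c).trans_le (Submodule.finrank_mono inf_le_left)

lemma eigenspace_restrictAut_eq_bot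
    (h : ∀ c, Module.End.eigenspace (g : Module.End F V) c = ⊥) (c : F) :
    Module.End.eigenspace (restrictAut g hP : Module.End F P) c = ⊥ := by
  rw [← Submodule.finrank_eq_zero, finrank_eigenspace_restrictAut, h, bot_inf_eq, finrank_bot]

lemma actsIrreducibly_restrictAut (hmin : ∀ R ∈ Module.End.invtSubmodule (g : Module.End F V),
    R < P → R = ⊥) : ActsIrreducibly (restrictAut g hP) := by
  intro R hR
  rw [or_iff_not_imp_right]
  intro hne
  have hinj := Submodule.map_injective_of_injective P.injective_subtype
  refine hinj ((hmin _ ?_ ((Submodule.map_subtype_le P R).lt_of_ne fun h => hne ?_)).trans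
    (Submodule.map_bot _).symm)
  · rintro _ ⟨v, hv, rfl⟩
    exact ⟨_, hR hv, rfl⟩
  · exact hinj (h.trans (Submodule.map_subtype_top P).symm)

lemma exists_actsIrreducibly_restrictAut [Nontrivial V] (g : V ≃ₗ[F] V) :
    ∃ (P : Submodule F V) (hP : P ∈ Module.End.invtSubmodule (g : Module.End F V)),
      P ≠ ⊥ ∧ ActsIrreducibly (restrictAut g hP) := by
  obtain ⟨P, ⟨hP, hbot⟩, hmin⟩ := exists_minimal_of_wellFoundedLT
    (fun R => R ∈ Module.End.invtSubmodule (g : Module.End F V) ∧ R ≠ ⊥)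
    ⟨⊤, Module.End.invtSubmodule.top_mem _, top_ne_bot⟩
  refine ⟨P, hP, hbot, actsIrreducibly_restrictAut hP fun R hR hlt => ?_⟩
  by_contra hR0
  exact hlt.not_ge (hmin ⟨hR, hR0⟩ hlt.le)

lemma two_le_finrank_of_eigenspace_eq_bot [Nontrivial V]
    (h : ∀ c, Module.End.eigenspace (g : Module.End F V) c = ⊥) : 2 ≤ Module.finrank F V := by
  by_contra! hlt
  obtain ⟨v, hv⟩ := exists_ne (0 : V)
  have hpos := Module.finrank_pos (R := F) (M := V)
  obtain ⟨c, hc⟩ := (finrank_eq_one_iff_of_nonzero' (K := F) v hv).1 (by lia) (g v)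
  exact hv ((Submodule.mem_bot F).1 (h c ▸ Module.End.mem_eigenspace_iff.2 hc.symm))

variable {hP hQ}

lemma autConj_prodEquivOfIsCompl_symm (hPQ : IsCompl P Q) :
    autConj (P.prodEquivOfIsCompl Q hPQ).symm g =
      (restrictAut g hP).skewProd (restrictAut g hQ) 0 := by
  refine LinearEquiv.ext fun v => ?_
  rw [autConj_apply, LinearEquiv.symm_apply_eq, LinearEquiv.symm_symm,
    Submodule.coe_prodEquivOfIsCompl', Submodule.coe_prodEquivOfIsCompl', map_add]
  simp [coe_restrictAut_apply]

end Restriction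

section Peeling

variable {F V : Type*} [Field F] [AddCommGroup V] [Module F V] [Finite F] [Finite V] {N : ℕ}
  {g : V ≃ₗ[F] V} {P Q : Submodule F V}
  {hP : P ∈ Module.End.invtSubmodule (g : Module.End F V)}
  {hQ : Q ∈ Module.End.invtSubmodule (g : Module.End F V)}

lemma conjDecay_of_isCompl (hN : (N : F) ≠ 0) (hPQ : IsCompl P Q) {x y : ℝ} {k : ℕ}
    (hx : ConjDecay N (restrictAut g hP) x) (hy : ConjDecay N (restrictAut g hQ) y)
    (hk : Nat.card (intertwiners (restrictAut g hP) (restrictAut g hQ)) ≤ Nat.card F ^ k) :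
    ConjDecay N g (Module.finrank F P * Module.finrank F Q - k + x + y) := by
  refine ConjDecay.of_autConj (P.prodEquivOfIsCompl Q hPQ).symm ?_
  rw [autConj_prodEquivOfIsCompl_symm hPQ]
  exact conjDecay_skewProd hN hx hy hk

lemma conjDecay_of_isCompl_eigenspace (hN : (N : F) ≠ 0) {c : F}
    (hc : IsCompl (Module.End.eigenspace (g : Module.End F V) c) Q) {x : ℝ}
    (hx : ConjDecay N (restrictAut g hQ) x) :
    ConjDecay N g (Module.finrank F (Module.End.eigenspace (g : Module.End F V) c) *
      Module.finrank F Q + x) := by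
  have hinter : Nat.card (intertwiners (restrictAut g (eigenspace_mem_invtSubmodule g c))
      (restrictAut g hQ)) ≤ Nat.card F ^ 0 := by
    rw [pow_zero, Finite.card_le_one_iff_subsingleton]
    refine Submodule.subsingleton_iff_eq_bot.2 ((Submodule.eq_bot_iff _).2 fun f hf =>
      LinearMap.ext fun v => Subtype.ext ?_)
    refine Submodule.disjoint_def.1 hc.disjoint _ (Module.End.mem_eigenspace_iff.2 ?_) (f v).2
    have hv : restrictAut g (eigenspace_mem_invtSubmodule g c) v = c • v :=
      Subtype.ext (Module.End.mem_eigenspace_iff.1 v.2)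
    have hfv := congrArg Subtype.val (hf v)
    rw [hv, map_smul] at hfv
    exact hfv.symm
  refine (conjDecay_of_isCompl hN hc (conjDecay_zero N _) hx hinter).mono (le_of_eq ?_)
  rw [Nat.cast_zero, sub_zero, add_zero]

lemma conjDecay_finrank_eigenspace (hN : (N : F) ≠ 0) (hg : g ^ N = 1) (c : F) :
    ConjDecay N g (Module.finrank F (Module.End.eigenspace (g : Module.End F V) c) *
      (Module.finrank F V -
        Module.finrank F (Module.End.eigenspace (g : Module.End F V) c) : ℝ)) := by
  obtain ⟨Q, hQ, hc⟩ :=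
    exists_mem_invtSubmodule_isCompl hN hg (eigenspace_mem_invtSubmodule g c)
  refine (conjDecay_of_isCompl_eigenspace (hQ := hQ) hN hc (conjDecay_zero N _)).mono
    (le_of_eq ?_)
  rw [← Submodule.finrank_add_eq_of_isCompl hc]
  push_cast
  ring

lemma ActsIrreducibly.conjDecay (hodd : Odd N) (hN : (N : F) ≠ 0) (hV : 2 ≤ Module.finrank F V)
    (hg : ActsIrreducibly g) : ConjDecay N g (decayRate (Nat.card F) (Module.finrank F V)) := by
  obtain ⟨n, hn⟩ := Nat.exists_eq_add_of_le' hV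
  obtain hq | hq : 3 ≤ Nat.card F ∨ Nat.card F = 2 := by
    have := Finite.one_lt_card (α := F)
    lia
  · rw [hn]
    exact hg.conjDecay_of_three_le hodd hN hq hn
  · rw [hq, hn]
    obtain _ | _ | n := n
    · exact (conjDecay_zero N g).mono (by norm_num [decayRate])
    · exact (hg.conjDecay_two hq hN hn).mono (by norm_num [decayRate])
    · exact hg.conjDecay_of_card_eq_two hodd hN hq hn

end Peeling

section DecayRate

lemma decayRate_add_le {q a : ℕ} (ha : 2 ≤ a) (r : ℕ) :
    decayRate q (a + r) ≤ a * r - r + decayRate q a + decayRate q r := by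
  have ha' : (2 : ℝ) ≤ a := mod_cast ha
  simp only [decayRate, Nat.cast_add]
  nlinarith [mul_nonneg (sub_nonneg.2 ha') (r.cast_nonneg : (0 : ℝ) ≤ r)]

lemma decayRate_add_le_of_le {q e r : ℕ} (he : e ≤ r) :
    decayRate q (e + r) ≤ e * r + decayRate q r := by
  have he' : (e : ℝ) ≤ r := mod_cast he
  have he0 : (0 : ℝ) ≤ e := e.cast_nonneg
  simp only [decayRate, Nat.cast_add]
  split_ifs <;> nlinarith [mul_nonneg he0 (sub_nonneg.2 he'), mul_nonneg he0 (he0.trans he')]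

lemma decayRate_add_le_of_lt_two_mul {q e r e' : ℕ} (he' : e' ≤ e) (her : e ≤ r)
    (hlt : r < 2 * e') : decayRate q (e + r) ≤ e * r + e' * (r - e') := by
  have h1 : (e' : ℝ) ≤ e := mod_cast he'
  have h2 : (e : ℝ) ≤ r := mod_cast her
  have h3 : (r : ℝ) < 2 * e' := mod_cast hlt
  have h4 : (r - e) * (r - e) ≤ (4 * e' : ℝ) * (r - e') :=
    mul_le_mul (by linarith [(e.cast_nonneg : (0 : ℝ) ≤ e)]) (by linarith) (by linarith)
      (by positivity)
  simp only [decayRate, Nat.cast_add]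
  split_ifs <;> nlinarith

end DecayRate

section SmallEigenspaces

variable {F : Type*} [Field F] [Finite F] {N : ℕ}

theorem conjDecay_of_eigenspace_eq_bot (hodd : Odd N) (hN : (N : F) ≠ 0) {V : Type*}
    [AddCommGroup V] [Module F V] [Finite V] {g : V ≃ₗ[F] V} (hg : g ^ N = 1)
    (heig : ∀ c, Module.End.eigenspace (g : Module.End F V) c = ⊥) :
    ConjDecay N g (decayRate (Nat.card F) (Module.finrank F V)) := by
  induction hV : Module.finrank F V using Nat.strong_induction_on generalizing V with | _ n ih
  obtain hsub | hnontriv := subsingleton_or_nontrivial V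
  · rw [← hV, Module.finrank_zero_of_subsingleton]
    exact (conjDecay_zero N g).mono (by simp [decayRate])
  obtain ⟨P, hP, hPbot, hirr⟩ := exists_actsIrreducibly_restrictAut g
  obtain ⟨Q, hQ, hPQ⟩ := exists_mem_invtSubmodule_isCompl hN hg hP
  have := Submodule.nontrivial_iff_ne_bot.2 hPbot
  have hfinrank := Submodule.finrank_add_eq_of_isCompl hPQ
  have htwo := two_le_finrank_of_eigenspace_eq_bot (eigenspace_restrictAut_eq_bot hP heig)
  have hdecayQ := ih _ (by lia) (restrictAut_pow_eq_one hQ hg)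
    (eigenspace_restrictAut_eq_bot hQ heig) rfl
  refine (conjDecay_of_isCompl hN hPQ (hirr.conjDecay hodd hN htwo) hdecayQ
    (hirr.card_intertwiners_le _)).mono ?_
  rw [← hV, ← hfinrank]
  exact decayRate_add_le htwo _

theorem conjDecay_of_two_mul_finrank_eigenspace_le (hodd : Odd N) (hN : (N : F) ≠ 0) {V : Type*}
    [AddCommGroup V] [Module F V] [Finite V] {g : V ≃ₗ[F] V} (hg : g ^ N = 1)
    (heig : ∀ c, 2 * Module.finrank F (Module.End.eigenspace (g : Module.End F V) c) ≤
      Module.finrank F V) :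
    ConjDecay N g (decayRate (Nat.card F) (Module.finrank F V)) := by
  induction hV : Module.finrank F V using Nat.strong_induction_on generalizing V with | _ n ih
  obtain ⟨c, hmax⟩ := Finite.exists_max fun c =>
    Module.finrank F (Module.End.eigenspace (g : Module.End F V) c)
  obtain hbot | hne := eq_or_ne (Module.End.eigenspace (g : Module.End F V) c) ⊥
  · rw [hbot, finrank_bot] at hmax
    exact hV ▸ conjDecay_of_eigenspace_eq_bot hodd hN hg fun c' =>
      Submodule.finrank_eq_zero.1 (Nat.le_zero.1 (hmax c'))
  obtain ⟨Q, hQ, hcompl⟩ :=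
    exists_mem_invtSubmodule_isCompl hN hg (eigenspace_mem_invtSubmodule g c)
  have hpos := Submodule.one_le_finrank_iff.2 hne
  have hfinrank := Submodule.finrank_add_eq_of_isCompl hcompl
  have hle := heig c
  rw [← hV, ← hfinrank]
  by_cases hsmall : ∀ c', 2 * Module.finrank F
      (Module.End.eigenspace (restrictAut g hQ : Module.End F Q) c') ≤ Module.finrank F Q
  · have hdecayQ := ih _ (by lia) (restrictAut_pow_eq_one hQ hg) hsmall rfl
    exact (conjDecay_of_isCompl_eigenspace hN hcompl hdecayQ).mono
      (decayRate_add_le_of_le (by lia))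
  · push Not at hsmall
    obtain ⟨c', hc'⟩ := hsmall
    have hdecayQ := conjDecay_finrank_eigenspace hN (restrictAut_pow_eq_one hQ hg) c'
    exact (conjDecay_of_isCompl_eigenspace hN hcompl hdecayQ).mono
      (decayRate_add_le_of_lt_two_mul
        ((finrank_eigenspace_restrictAut_le hQ c').trans (hmax c')) (by lia) hc')

end SmallEigenspaces

section CentralizerOfOrderFive

variable {G : Type*} [Group G]

lemma card_modEq_card_inf_centralizer {p : ℕ} [Fact p.Prime] {S : Subgroup G} [Finite S] {r : G}
    (hrS : r ∈ Subgroup.normalizer (S : Set G)) (hrp : r ^ p = 1) :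
    Nat.card S ≡ Nat.card (S ⊓ Subgroup.centralizer {r} : Subgroup G) [MOD p] := by
  classical
  have := Fintype.ofFinite S
  let f : Function.End S := MulAction.toEndHom (S.normalizerMonoidHom ⟨r, hrS⟩)
  have hf : f ^ p ^ 1 = 1 := by
    rw [pow_one, ← map_pow, ← map_pow,
      show (⟨r, hrS⟩ : Subgroup.normalizer (S : Set G)) ^ p = 1 from Subtype.ext hrp,
      map_one, map_one]
  have hfix (s : S) : f s = s ↔ s.1 ∈ Subgroup.centralizer {r} := by
    rw [Subgroup.mem_centralizer_singleton_iff, eq_comm (a := s.1 * r), ← mul_inv_eq_iff_eq_mul]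
    exact Subtype.ext_iff
  have hcard : Nat.card (Function.fixedPoints f) =
      Nat.card (S ⊓ Subgroup.centralizer {r} : Subgroup G) :=
    Nat.card_congr ((Equiv.subtypeEquivRight hfix).trans
      (Equiv.subtypeSubtypeEquivSubtypeInter (· ∈ S) (· ∈ Subgroup.centralizer {r})))
  rw [← hcard, Nat.card_eq_fintype_card, Nat.card_eq_fintype_card]
  convert Equiv.Perm.card_fixedPoints_modEq hf

lemma card_sylow_three_of_card_eq [Fact (Nat.Prime 3)] [Finite G] (hG : Nat.card G = 315)
    (S : Sylow 3 G) : Nat.card S = 9 := by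
  rw [S.card_eq_multiplicity, hG, show 315 = 3 ^ 2 * 35 by rfl,
    Nat.factorization_eq_of_coprime_left (by norm_num) (by norm_num),
    Nat.Prime.factorization_pow Nat.prime_three, Finsupp.single_eq_same]
  rfl

lemma five_dvd_card_normalizer_sylow_three [Fact (Nat.Prime 3)] [Finite G]
    (hG : Nat.card G = 315) (S : Sylow 3 G) :
    5 ∣ Nat.card (Subgroup.normalizer (S : Set G)) := by
  have hindex : S.index = 35 := by
    have h := S.card_mul_index
    rw [hG, card_sylow_three_of_card_eq hG] at h
    lia
  have hseven : Nat.card (Sylow 3 G) ∣ 7 := by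
    have hdvd := hindex ▸ S.card_dvd_index
    exact (by decide : ∀ k < 36, k ∣ 35 → k ≡ 1 [MOD 3] → k ∣ 7) _
      (Nat.lt_succ_of_le (Nat.le_of_dvd (by norm_num) hdvd)) hdvd (card_sylow_modEq_one 3 G)
  have h := (Subgroup.normalizer (S : Set G)).card_mul_index
  rw [← S.card_eq_index_normalizer, hG] at h
  exact Nat.Coprime.dvd_of_dvd_mul_right (Nat.Coprime.coprime_dvd_right hseven (by norm_num))
    (h ▸ (by norm_num : 5 ∣ 315))

/-- The normalizer of a Sylow `3`-subgroup contains an element of order `5`, which cannot act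
nontrivially on a group of order `9`. -/
lemma exists_orderOf_eq_five_and_lt_card_centralizer (hG : Nat.card G = 315) :
    ∃ r : G, orderOf r = 5 ∧ 15 < Nat.card (Subgroup.centralizer {r}) := by
  have := Nat.finite_of_card_ne_zero (hG.trans_ne (by norm_num))
  have : Fact (Nat.Prime 3) := ⟨Nat.prime_three⟩
  have : Fact (Nat.Prime 5) := ⟨Nat.prime_five⟩
  let S : Sylow 3 G := default
  have hS : Nat.card S = 9 := card_sylow_three_of_card_eq hG S
  obtain ⟨r, hr⟩ := exists_prime_orderOf_dvd_card' 5 (five_dvd_card_normalizer_sylow_three hG S)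
  rw [← Subgroup.orderOf_coe] at hr
  have hle : S ≤ Subgroup.centralizer {r.1} := by
    have hmod : 9 ≡ _ [MOD 5] :=
      hS ▸ card_modEq_card_inf_centralizer r.2 (hr ▸ pow_orderOf_eq_one r.1)
    have hdvd : _ ∣ 9 := hS ▸ Subgroup.card_dvd_of_le
      (inf_le_left : (S : Subgroup G) ⊓ Subgroup.centralizer {r.1} ≤ S)
    have hcard : Nat.card ((S : Subgroup G) ⊓ Subgroup.centralizer {r.1} : Subgroup G) = 9 :=
      (by decide : ∀ k < 10, 9 ≡ k [MOD 5] → k ∣ 9 → k = 9) _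
        (Nat.lt_succ_of_le (Nat.le_of_dvd (by norm_num) hdvd)) hmod hdvd
    exact inf_eq_left.1 (Subgroup.eq_of_le_of_card_ge inf_le_left (hS.trans hcard.symm).le)
  have hnine : 9 ∣ Nat.card (Subgroup.centralizer {r.1}) := hS ▸ Subgroup.card_dvd_of_le hle
  have hfive : 5 ∣ Nat.card (Subgroup.centralizer {r.1}) := by
    rw [← hr]
    exact Subgroup.orderOf_dvd_natCard _ (Subgroup.mem_centralizer_singleton_iff.2 rfl)
  have hdvd : 9 * 5 ∣ Nat.card (Subgroup.centralizer {r.1}) :=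
    Nat.Coprime.mul_dvd_of_dvd_of_dvd (by norm_num) hnine hfive
  exact ⟨r, hr, (by norm_num : 15 < 9 * 5).trans_le (Nat.le_of_dvd Nat.card_pos hdvd)⟩

end CentralizerOfOrderFive

section CharTwoOrders

variable {F V : Type*} [Field F] [AddCommGroup V] [Module F V] [Finite V] {N : ℕ}

lemma eq_one_of_pow_five_eq_one (hq : Nat.card F = 2) (hV : Module.finrank F V ≤ 3)
    {g : V ≃ₗ[F] V} (hg : g ^ 5 = 1) : g = 1 := by
  have := Nat.finite_of_card_ne_zero (hq.trans_ne two_ne_zero)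
  by_contra hne
  have : Fact (Nat.Prime 5) := ⟨Nat.prime_five⟩
  have hdvd : 5 ∣ Nat.card (V ≃ₗ[F] V) := orderOf_eq_prime hg hne ▸ orderOf_dvd_natCard g
  rw [card_linearEquiv, hq] at hdvd
  generalize Module.finrank F V = n at *
  interval_cases n <;> simp [Finset.prod_Icc_succ_top] at hdvd

lemma actsIrreducibly_of_orderOf_eq_five (hq : Nat.card F = 2) (hV : Module.finrank F V = 4)
    {g : V ≃ₗ[F] V} (hg : orderOf g = 5) : ActsIrreducibly g := by
  intro P hP
  by_contra! hne
  have hN : ((5 : ℕ) : F) ≠ 0 := by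
    have := Nat.finite_of_card_ne_zero (hq.trans_ne two_ne_zero)
    have := Fintype.ofFinite F
    have htwo := FiniteField.cast_card_eq_zero F
    rw [Fintype.card_eq_nat_card, hq] at htwo
    push_cast at htwo ⊢
    exact fun h5 => one_ne_zero (α := F) (by linear_combination h5 - 2 * htwo)
  have hpow : g ^ 5 = 1 := hg ▸ pow_orderOf_eq_one g
  obtain ⟨Q, hQ, hPQ⟩ := exists_mem_invtSubmodule_isCompl hN hpow hP
  have hfinrank := Submodule.finrank_add_eq_of_isCompl hPQ
  have hP0 := Submodule.one_le_finrank_iff.2 hne.1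
  have hPlt := Submodule.finrank_lt hne.2
  have hres {R : Submodule F V} (hR : R ∈ Module.End.invtSubmodule (g : Module.End F V))
      (hR3 : Module.finrank F R ≤ 3) (v : V) (hv : v ∈ R) : g v = v :=
    congrArg Subtype.val (LinearEquiv.congr_fun
      (eq_one_of_pow_five_eq_one hq hR3 (restrictAut_pow_eq_one hR hpow)) ⟨v, hv⟩)
  have hone : g = 1 := LinearEquiv.ext fun v => by
    obtain ⟨x, hx, y, hy, rfl⟩ :=
      Submodule.mem_sup.1 (hPQ.sup_eq_top ▸ Submodule.mem_top : v ∈ P ⊔ Q)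
    rw [map_add, hres hP (by lia) x hx, hres hQ (by lia) y hy]
    rfl
  rw [hone, orderOf_one] at hg
  lia

lemma card_le_of_finrank_eq_four (hq : Nat.card F = 2) (hV : Module.finrank F V = 4)
    (hodd : Odd N) {H : Subgroup (V ≃ₗ[F] V)} (hH : ∀ h ∈ H, h ^ N = 1) : Nat.card H ≤ 105 := by
  have := Nat.finite_of_card_ne_zero (hq.trans_ne two_ne_zero)
  have : Nontrivial V := Module.nontrivial_of_finrank_pos (R := F) (by lia)
  have hcard : Nat.card (V ≃ₗ[F] V) = 2 ^ 6 * 315 := by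
    rw [card_linearEquiv, hV, hq]
    rfl
  have hdvd : Nat.card H ∣ 315 :=
    ((odd_card_of_pow_eq_one hodd hH).coprime_two_right.pow_right 6).dvd_of_dvd_mul_left
      (hcard ▸ H.card_subgroup_dvd_card)
  suffices hne : Nat.card H ≠ 315 by
    obtain ⟨k, hk⟩ := hdvd
    by_contra! hlt
    have : k < 3 := by nlinarith
    interval_cases k <;> lia
  intro h315
  obtain ⟨r, hr, hlt⟩ := exists_orderOf_eq_five_and_lt_card_centralizer h315
  have hirr := actsIrreducibly_of_orderOf_eq_five hq hV ((Subgroup.orderOf_coe r).trans hr)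
  have hle := hirr.card_centralizer_le
  rw [hq, hV] at hle
  have hmem (a : Subgroup.centralizer {r}) : a.1.1 ∈ Subgroup.centralizer {r.1} :=
    Subgroup.mem_centralizer_singleton_iff.2
      (congrArg Subtype.val (Subgroup.mem_centralizer_singleton_iff.1 a.2))
  refine hlt.not_ge ((Nat.card_le_card_of_injective (fun a => ⟨a.1.1, hmem a⟩) ?_).trans hle)
  exact fun a b hab => Subtype.ext (Subtype.ext (Subtype.mk.inj hab))

lemma three_mul_card_le_orderBound (hq : Nat.card F = 2) (hodd : Odd N) (hN : (N : F) ≠ 0) {n : ℕ}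
    (hV : Module.finrank F V = n + 4) {H : Subgroup (V ≃ₗ[F] V)} (hH : ∀ h ∈ H, h ^ N = 1) :
    3 * Nat.card H ≤ orderBound 2 (n + 4) := by
  have := Nat.finite_of_card_ne_zero (hq.trans_ne two_ne_zero)
  induction n generalizing V with
  | zero =>
    have h315 : orderBound 2 4 = 3 * 105 := rfl
    rw [zero_add, h315]
    exact Nat.mul_le_mul_left 3 (card_le_of_finrank_eq_four hq hV hodd hH)
  | succ n ih =>
    have : Nontrivial V := Module.nontrivial_of_finrank_pos (R := F) (by lia)
    obtain ⟨v, hv⟩ := exists_ne (0 : V)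
    have := Finite.of_surjective _ (F ∙ v).mkQ_surjective
    obtain ⟨K', hK', hcard, -⟩ := exists_card_eq_of_apply_eq_self hN
      (K := MulAction.stabilizer (V ≃ₗ[F] V) v ⊓ H) (fun k hk => hH k hk.2) (fun k hk => hk.1)
    calc 3 * Nat.card H
        ≤ 3 * ((2 ^ (n + 5) - 1) * Nat.card K') := by
          rw [hcard, ← hV, ← hq]
          exact Nat.mul_le_mul_left 3 (card_le_mul_card_stabilizer_inf _ hv)
      _ = (2 ^ (n + 5) - 1) * (3 * Nat.card K') := by ring
      _ ≤ orderBound 2 (n + 5) := by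
          rw [orderBound_succ _ (by lia : 2 ≤ n + 4)]
          exact Nat.mul_le_mul_left _ (ih (finrank_quotient_span_singleton hv hV) hK')

end CharTwoOrders

section UnionBound

variable {F V : Type*} [Field F] [AddCommGroup V] [Module F V] {N : ℕ}

lemma eq_of_comp_eq_comp {W : Type*} [AddCommGroup W] [Module F W] (hN : (N : F) ≠ 0)
    {g h : V ≃ₗ[F] V} (hgh : (h⁻¹ * g) ^ N = 1) {f : V →ₗ[F] W} {A : W →ₗ[F] W}
    (hg : f ∘ₗ g = A ∘ₗ f) (hh : f ∘ₗ h = A ∘ₗ f)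
    (hgker : ∀ v ∈ LinearMap.ker f, g v = v) (hhker : ∀ v ∈ LinearMap.ker f, h v = v) : g = h := by
  have hsub (v : V) : g v - h v ∈ LinearMap.ker f := by
    rw [LinearMap.mem_ker, map_sub, sub_eq_zero]
    exact (LinearMap.congr_fun hg v).trans (LinearMap.congr_fun hh v).symm
  have hfix {v : V} (hv : v ∈ LinearMap.ker f) : h.symm v = v :=
    h.symm_apply_eq.2 (hhker v hv).symm
  have happly (v : V) : h.symm (g v) - v = g v - h v := by
    rw [← hfix (hsub v), map_sub, h.symm_apply_apply]
  have hone := eq_one_of_sub_one_sq_eq_zero (F := F) (a := ((h⁻¹ * g : V ≃ₗ[F] V) : Module.End F V))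
    hN (LinearMap.ext fun v => by
      change h.symm (g (h.symm (g v) - v)) - (h.symm (g v) - v) = 0
      rw [happly, happly, hgker _ (hsub v), hhker _ (hsub v), sub_self])
    (by rw [← LinearEquiv.automorphismGroup.toLinearMapMonoidHom_apply, ← map_pow, hgh, map_one])
  exact (inv_mul_eq_one.1 (LinearEquiv.toLinearMap_injective hone)).symm

lemma exists_scalar_pow_eq_one (hN : (N : F) ≠ 0) {g : V ≃ₗ[F] V} (hg : g ^ N = 1) {c : F}
    (hc : Module.End.eigenspace (g : Module.End F V) c ≠ ⊥) :
    ∃ z ∈ scalarSubgroup F V, z ^ N = 1 ∧ ∀ v, z v = c • v := by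
  obtain ⟨v, hv⟩ := Module.End.HasEigenvalue.exists_hasEigenvector hc
  have hcN : c ^ N = 1 := by
    have hpow := hv.pow_apply N
    rw [← LinearEquiv.automorphismGroup.toLinearMapMonoidHom_apply, ← map_pow, hg] at hpow
    exact smul_left_injective F hv.2 (hpow.symm.trans (one_smul F v).symm)
  have hN0 : N ≠ 0 := by rintro rfl; exact hN Nat.cast_zero
  have hc0 : c ≠ 0 := by rintro rfl; exact zero_ne_one ((zero_pow hN0).symm.trans hcN)
  refine ⟨DistribMulAction.toModuleAut F V (Units.mk0 c hc0), ⟨_, rfl⟩, ?_, fun v => rfl⟩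
  rw [← map_pow, ← map_one (DistribMulAction.toModuleAut F V (S := Fˣ))]
  exact congrArg _ (Units.ext hcN)

lemma exists_comp_eq_of_finrank_eigenspace [FiniteDimensional F V] (hN : (N : F) ≠ 0)
    {g : V ≃ₗ[F] V} (hg : g ^ N = 1) {c : F} {j : ℕ} (hj : j < Module.finrank F V)
    (hc : Module.finrank F (Module.End.eigenspace (g : Module.End F V) c) + j =
      Module.finrank F V) :
    ∃ z ∈ scalarSubgroup F V, z ^ N = 1 ∧
      ∃ (f : V →ₗ[F] (Fin j → F)) (A : Module.End F (Fin j → F)),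
      f ∘ₗ (z⁻¹ * g : V ≃ₗ[F] V) = A ∘ₗ f ∧ ∀ v ∈ LinearMap.ker f, (z⁻¹ * g) v = v := by
  set E := Module.End.eigenspace (g : Module.End F V) c with hE
  obtain ⟨z, hz, hzN, hzc⟩ := exists_scalar_pow_eq_one hN hg
    (c := c) fun h => by rw [← hE] at h; rw [h, finrank_bot] at hc; lia
  have hquot : Module.finrank F (V ⧸ E) = Module.finrank F (Fin j → F) := by
    have := E.finrank_quotient_add_finrank
    rw [Module.finrank_fin_fun]
    lia
  let e := LinearEquiv.ofFinrankEq (V ⧸ E) (Fin j → F) hquot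
  have hfix (v : V) (hv : v ∈ E) : (z⁻¹ * g) v = v := by
    change z.symm (g v) = v
    rw [z.symm_apply_eq, hzc]
    exact Module.End.mem_eigenspace_iff.1 hv
  have hE' : E ≤ E.comap ((z⁻¹ * g : V ≃ₗ[F] V) : V →ₗ[F] V) := fun v hv => by
    rw [Submodule.mem_comap, LinearEquiv.coe_coe, hfix v hv]
    exact hv
  refine ⟨z, hz, hzN, e ∘ₗ E.mkQ, e ∘ₗ E.mapQ E _ hE' ∘ₗ e.symm, ?_, ?_⟩
  · ext1 v
    simp only [LinearMap.comp_apply, LinearEquiv.coe_coe, e.symm_apply_apply,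
      Submodule.mkQ_apply, Submodule.mapQ_apply]
  · rw [LinearEquiv.ker_comp, E.ker_mkQ]
    exact hfix

/-- The elements of `H` with an eigenspace of codimension `j`. -/
def eigenCodimSet (H : Subgroup (V ≃ₗ[F] V)) (j : ℕ) : Set (V ≃ₗ[F] V) :=
  {g | g ∈ H ∧ ∃ c, Module.finrank F (Module.End.eigenspace (g : Module.End F V) c) + j =
    Module.finrank F V}

variable [Finite F] [Finite V]

lemma ncard_eigenCodimSet_le (hN : (N : F) ≠ 0) {H : Subgroup (V ≃ₗ[F] V)}
    (hH : ∀ h ∈ H, h ^ N = 1) (hscal : ∀ z ∈ scalarSubgroup F V, z ^ N = 1 → z ∈ H) {j : ℕ}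
    (hj : j < Module.finrank F V) :
    (eigenCodimSet H j).ncard ≤ Nat.card (H ⊓ scalarSubgroup F V : Subgroup (V ≃ₗ[F] V)) *
      Nat.card F ^ (Module.finrank F V * j + j * j) := by
  have hex (g : eigenCodimSet H j) :=
    exists_comp_eq_of_finrank_eigenspace hN (hH _ g.2.1) hj g.2.2.choose_spec
  choose z hz hzN f A hcomp hker using hex
  have hzH (g) : z g ∈ H := hscal _ (hz g) (hzN g)
  have hcard : Nat.card (V →ₗ[F] (Fin j → F)) * Nat.card (Module.End F (Fin j → F)) =
      Nat.card F ^ (Module.finrank F V * j + j * j) := by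
    rw [Module.natCard_eq_pow_finrank (K := F), Module.natCard_eq_pow_finrank (K := F)
      (V := Module.End F (Fin j → F)), Module.finrank_linearMap, Module.finrank_linearMap,
      Module.finrank_fin_fun, pow_add]
  rw [← hcard, ← Nat.card_prod, ← Nat.card_prod, ← Nat.card_coe_set_eq]
  refine Nat.card_le_card_of_injective (fun g => (⟨z g, hzH g, hz g⟩, f g, A g)) fun g g' h => ?_
  obtain ⟨hzz, hfA⟩ := Prod.mk.inj h
  obtain ⟨hff, hAA⟩ := Prod.mk.inj hfA
  have hmem (g) : (z g)⁻¹ * g.1 ∈ H := H.mul_mem (H.inv_mem (hzH g)) g.2.1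
  have heq := eq_of_comp_eq_comp hN (hH _ (H.mul_mem (H.inv_mem (hmem g')) (hmem g)))
    (hcomp g) (hff ▸ hAA ▸ hcomp g') (hker g) (hff ▸ hker g')
  rw [show z g = z g' from congrArg Subtype.val hzz] at heq
  exact Subtype.ext (mul_left_cancel heq)

lemma natCast_mul_rpow_le {q n j B C : ℕ} (hq : 2 ≤ q) (hjn : 2 * j < n)
    (hB : B ≤ C * q ^ (n * j + j * j)) :
    B * ((q : ℝ) ^ (-(j * (n - j) : ℝ))) ^ 3 ≤ C * (1 / 4) ^ j := by
  have hq0 : (0 : ℝ) < q := by positivity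
  have hq2 : (2 : ℝ) ≤ q := by exact_mod_cast hq
  have hjn' : (2 * j + 1 : ℝ) ≤ n := by exact_mod_cast hjn
  calc B * ((q : ℝ) ^ (-(j * (n - j) : ℝ))) ^ 3
      ≤ C * (q : ℝ) ^ ((n * j + j * j : ℕ) : ℝ) * ((q : ℝ) ^ (-(j * (n - j) : ℝ))) ^ 3 := by
        rw [Real.rpow_natCast]
        gcongr
        exact_mod_cast hB
    _ = C * (q : ℝ) ^ (-(j * (2 * n - 4 * j) : ℝ)) := by
        rw [← Real.rpow_natCast, ← Real.rpow_mul hq0.le, mul_assoc, ← Real.rpow_add hq0]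
        push_cast
        ring_nf
    _ ≤ C * (q : ℝ) ^ (-(2 * j : ℕ) : ℝ) := by
        gcongr
        · linarith
        · push_cast
          nlinarith [(Nat.cast_nonneg j : (0 : ℝ) ≤ j)]
    _ ≤ C * (1 / 4) ^ j := by
        rw [Real.rpow_neg hq0.le, Real.rpow_natCast, pow_mul, one_div, inv_pow]
        gcongr
        nlinarith

lemma sum_one_fourth_pow_lt (J : ℕ) : ∑ j ∈ Finset.Icc 1 J, (1 / 4 : ℝ) ^ j < 1 / 3 := by
  suffices h : ∑ j ∈ Finset.Icc 1 J, (1 / 4 : ℝ) ^ j = (1 - (1 / 4) ^ J) / 3 by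
    rw [h]
    have : (0 : ℝ) < (1 / 4) ^ J := by positivity
    linarith
  induction J with
  | zero => simp
  | succ J ih =>
    rw [Finset.sum_Icc_succ_top (by lia), ih]
    ring

lemma conjProb_pow_three_le {H : Subgroup (V ≃ₗ[F] V)} (hN : (N : F) ≠ 0)
    (hH : ∀ h ∈ H, h ^ N = 1) {σ : ℝ} {g : V ≃ₗ[F] V} (hg : g ∈ H) (hgs : g ∉ scalarSubgroup F V)
    (hdecay : (∀ c, 2 * Module.finrank F (Module.End.eigenspace (g : Module.End F V) c) ≤
      Module.finrank F V) → ConjDecay N g σ) :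
    conjProb (slSubgroup F V) H g ^ 3 ≤ ((Nat.card F : ℝ) ^ (-σ)) ^ 3 +
      ∑ j ∈ Finset.Icc 1 ((Module.finrank F V - 1) / 2),
        (eigenCodimSet H j).indicator
          (fun _ => ((Nat.card F : ℝ) ^ (-(j * (Module.finrank F V - j) : ℝ))) ^ 3) g := by
  have hnonneg (j : ℕ) : 0 ≤ (eigenCodimSet H j).indicator
      (fun _ => ((Nat.card F : ℝ) ^ (-(j * (Module.finrank F V - j) : ℝ))) ^ 3) g :=
    Set.indicator_nonneg (fun _ _ => by positivity) g
  by_cases hsmall : ∀ c, 2 * Module.finrank F (Module.End.eigenspace (g : Module.End F V) c) ≤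
      Module.finrank F V
  · exact le_add_of_le_of_nonneg (pow_le_pow_left₀ (conjProb_nonneg ..) (hdecay hsmall H hH) 3)
      (Finset.sum_nonneg fun j _ => hnonneg j)
  push Not at hsmall
  obtain ⟨c, hc⟩ := hsmall
  have hlt : Module.finrank F (Module.End.eigenspace (g : Module.End F V) c) <
      Module.finrank F V := Submodule.finrank_lt fun htop =>
    hgs (mem_scalarSubgroup.2 ⟨c, fun v =>
      Module.End.mem_eigenspace_iff.1 (htop ▸ Submodule.mem_top : v ∈ _)⟩)
  obtain ⟨j, hj⟩ := Nat.exists_eq_add_of_le hlt.le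
  refine le_add_of_nonneg_of_le (by positivity) (le_trans ?_ (Finset.single_le_sum
    (fun j _ => hnonneg j) (Finset.mem_Icc.2 (by lia) : j ∈ Finset.Icc 1 _)))
  rw [Set.indicator_of_mem (show g ∈ eigenCodimSet H j from ⟨hg, c, hj.symm⟩)]
  refine pow_le_pow_left₀ (conjProb_nonneg ..)
    ((conjDecay_finrank_eigenspace hN (hH g hg) c H hH).trans_eq ?_) 3
  rw [hj]
  push_cast
  ring_nf

open scoped Classical in
lemma sum_conjProb_pow_three_le [Fintype (V ≃ₗ[F] V)] (hN : (N : F) ≠ 0)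
    {H : Subgroup (V ≃ₗ[F] V)} (hH : ∀ h ∈ H, h ^ N = 1) {σ : ℝ}
    (hdecay : ∀ g ∈ H, g ∉ scalarSubgroup F V →
      (∀ c, 2 * Module.finrank F (Module.End.eigenspace (g : Module.End F V) c) ≤
        Module.finrank F V) → ConjDecay N g σ) :
    ∑ g with g ∈ H ∧ g ∉ scalarSubgroup F V, conjProb (slSubgroup F V) H g ^ 3 ≤
      Nat.card H * ((Nat.card F : ℝ) ^ (-σ)) ^ 3 +
        ∑ j ∈ Finset.Icc 1 ((Module.finrank F V - 1) / 2), (eigenCodimSet H j).ncard *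
          ((Nat.card F : ℝ) ^ (-(j * (Module.finrank F V - j) : ℝ))) ^ 3 := by
  refine (Finset.sum_le_sum fun g hg => ?_).trans (?_ : ∑ g with g ∈ H ∧ g ∉ scalarSubgroup F V,
    (((Nat.card F : ℝ) ^ (-σ)) ^ 3 + ∑ j ∈ Finset.Icc 1 ((Module.finrank F V - 1) / 2),
      (eigenCodimSet H j).indicator
        (fun _ => ((Nat.card F : ℝ) ^ (-(j * (Module.finrank F V - j) : ℝ))) ^ 3) g) ≤ _)
  · obtain ⟨hgH, hgs⟩ := (Finset.mem_filter_univ g).1 hg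
    exact conjProb_pow_three_le hN hH hgH hgs (hdecay g hgH hgs)
  rw [Finset.sum_add_distrib, Finset.sum_comm]
  refine add_le_add ?_ (Finset.sum_le_sum fun j _ => ?_)
  · rw [Finset.sum_const, nsmul_eq_mul]
    gcongr
    rw [Nat.card_eq_fintype_card, Fintype.card_subtype]
    exact Finset.card_le_card (Finset.monotone_filter_right _ fun _ _ h => h.1)
  · rw [Finset.sum_indicator_eq_sum_filter, Finset.sum_const, nsmul_eq_mul,
      Set.ncard_eq_toFinset_card']
    gcongr
    intro g hg
    simpa using (Finset.mem_filter.1 hg).2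

theorem exists_inf_conjBy_le_scalarSubgroup (hodd : Odd N) (hN : (N : F) ≠ 0)
    {H : Subgroup (V ≃ₗ[F] V)} (hH : ∀ h ∈ H, h ^ N = 1)
    (hscal : ∀ z ∈ scalarSubgroup F V, z ^ N = 1 → z ∈ H) {σ : ℝ}
    (hdecay : ∀ g ∈ H, g ∉ scalarSubgroup F V →
      (∀ c, 2 * Module.finrank F (Module.End.eigenspace (g : Module.End F V) c) ≤
        Module.finrank F V) → ConjDecay N g σ)
    (hσ : Nat.card H * ((Nat.card F : ℝ) ^ (-σ)) ^ 3 ≤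
      5 / 3 * Nat.card (H ⊓ scalarSubgroup F V : Subgroup (V ≃ₗ[F] V))) :
    ∃ x ∈ slSubgroup F V, ∃ y ∈ slSubgroup F V, ∃ z ∈ slSubgroup F V,
      H ⊓ conjBy H x ⊓ conjBy H y ⊓ conjBy H z ≤ H ⊓ scalarSubgroup F V := by
  classical
  have := Fintype.ofFinite (V ≃ₗ[F] V)
  refine exists_inf_conjBy_le (odd_card_of_pow_eq_one hodd hH) inf_le_left
    (inf_le_right.trans (scalarSubgroup_le_center F V)) ?_
  set Z := H ⊓ scalarSubgroup F V
  have hZ0 : (0 : ℝ) < Nat.card Z := Nat.cast_pos.2 Nat.card_pos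
  have hmem (g : V ≃ₗ[F] V) : g ∈ H ∧ g ∉ Z ↔ g ∈ H ∧ g ∉ scalarSubgroup F V :=
    and_congr_right fun hg => not_congr (and_iff_right hg)
  simp_rw [hmem]
  calc _ ≤ _ := sum_conjProb_pow_three_le hN hH hdecay
    _ ≤ 5 / 3 * Nat.card Z +
        ∑ j ∈ Finset.Icc 1 ((Module.finrank F V - 1) / 2), Nat.card Z * (1 / 4 : ℝ) ^ j := by
      refine add_le_add hσ (Finset.sum_le_sum fun j hj => ?_)
      have hj' := Finset.mem_Icc.1 hj
      exact natCast_mul_rpow_le Finite.one_lt_card (by lia)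
        (ncard_eigenCodimSet_le hN hH hscal (by lia))
    _ < 2 * Nat.card Z := by
      rw [← Finset.mul_sum]
      nlinarith [sum_one_fourth_pow_lt ((Module.finrank F V - 1) / 2)]

end UnionBound

section Numerics

lemma orderBound_succ_mul_rpow_le {q n : ℕ} (hq : 1 ≤ q) (hn : 2 ≤ n)
    (h : (n + 1 : ℝ) ≤ 3 * (decayRate q (n + 1) - decayRate q n)) :
    orderBound q (n + 1) * ((q : ℝ) ^ (-decayRate q (n + 1))) ^ 3 ≤
      orderBound q n * ((q : ℝ) ^ (-decayRate q n)) ^ 3 := by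
  have hq0 : (0 : ℝ) < q := by positivity
  have hq1 : (1 : ℝ) ≤ q := by exact_mod_cast hq
  have hfactor : ((q ^ (n + 1) - 1 : ℕ) : ℝ) * ((q : ℝ) ^ (-decayRate q (n + 1))) ^ 3 ≤
      ((q : ℝ) ^ (-decayRate q n)) ^ 3 := by
    calc ((q ^ (n + 1) - 1 : ℕ) : ℝ) * ((q : ℝ) ^ (-decayRate q (n + 1))) ^ 3
        ≤ (q : ℝ) ^ (n + 1 : ℝ) * ((q : ℝ) ^ (-decayRate q (n + 1))) ^ 3 := by
          gcongr
          exact_mod_cast Nat.sub_le _ _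
      _ = (q : ℝ) ^ (n + 1 - 3 * decayRate q (n + 1)) := by
          rw [← Real.rpow_natCast _ 3, ← Real.rpow_mul hq0.le, ← Real.rpow_add hq0]
          push_cast
          ring_nf
      _ ≤ (q : ℝ) ^ (-decayRate q n * 3) := Real.rpow_le_rpow_of_exponent_le hq1 (by linarith)
      _ = ((q : ℝ) ^ (-decayRate q n)) ^ 3 := by
          rw [Real.rpow_mul hq0.le]
          exact_mod_cast rfl
  rw [orderBound_succ q hn, Nat.cast_mul, mul_comm ((_ : ℕ) : ℝ), mul_assoc]
  gcongr

lemma orderBound_mul_rpow_le_one {q : ℕ} (hq : 3 ≤ q) (n : ℕ) :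
    orderBound q (n + 2) * ((q : ℝ) ^ (-decayRate q (n + 2))) ^ 3 ≤ 1 := by
  have hq2 : q ≠ 2 := by lia
  have hq0 : (0 : ℝ) < q := by positivity
  induction n with
  | zero =>
    have hle : dimTwoBound q ≤ (q : ℝ) ^ (-(-(3 / 2)) : ℝ) := by
      refine le_rpow_neg_of_mul_rpow_le (b := (3 : ℕ)) (by norm_cast; lia)
        ((dimTwoBound_mul_rpow_le hq).trans ?_) (by norm_num)
      rw [Real.rpow_natCast, pow_succ' (q : ℝ) 2]
      exact_mod_cast Nat.mul_le_mul (Nat.sub_le q 1) (Nat.sub_le (q ^ 2) 1)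
    rw [zero_add, orderBound_two, show decayRate q 2 = 1 / 2 by norm_num [decayRate, hq2],
      ← Real.rpow_natCast, ← Real.rpow_mul hq0.le]
    calc dimTwoBound q * (q : ℝ) ^ (-(1 / 2) * (3 : ℕ) : ℝ)
        ≤ (q : ℝ) ^ (-(-(3 / 2)) : ℝ) * (q : ℝ) ^ (-(1 / 2) * (3 : ℕ) : ℝ) := by gcongr
      _ = 1 := by
        rw [← Real.rpow_add hq0]
        norm_num
  | succ n ih =>
    refine (orderBound_succ_mul_rpow_le (by lia) (by lia) ?_).trans ih
    simp only [decayRate, if_neg hq2]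
    push_cast
    linarith [(Nat.cast_nonneg n : (0 : ℝ) ≤ n)]

lemma orderBound_two_mul_rpow_le_five (n : ℕ) :
    orderBound 2 (n + 4) * (((2 : ℕ) : ℝ) ^ (-decayRate 2 (n + 4))) ^ 3 ≤ 5 := by
  induction n with
  | zero =>
    have h315 : orderBound 2 4 = 315 := rfl
    rw [zero_add, h315, show decayRate 2 4 = (2 : ℕ) by norm_num [decayRate],
      Real.rpow_neg (by norm_num), Real.rpow_natCast]
    norm_num
  | succ n ih =>
    refine (orderBound_succ_mul_rpow_le (by lia) (by lia) ?_).trans ih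
    simp only [decayRate, if_pos]
    push_cast
    linarith [(Nat.cast_nonneg n : (0 : ℝ) ≤ n)]

end Numerics

section SmallDimension

variable {F V : Type*} [Field F] [AddCommGroup V] [Module F V] [Finite V] {N : ℕ}

lemma conjDecay_two_of_finrank_eq_three (hq : Nat.card F = 2) (hN : (N : F) ≠ 0)
    (hV : Module.finrank F V = 3) {g : V ≃ₗ[F] V} (hg : g ^ N = 1)
    (heig : ∀ c, 2 * Module.finrank F (Module.End.eigenspace (g : Module.End F V) c) ≤
      Module.finrank F V) : ConjDecay N g 2 := by
  have := Nat.finite_of_card_ne_zero (hq.trans_ne two_ne_zero)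
  by_cases hbot : ∀ c, Module.End.eigenspace (g : Module.End F V) c = ⊥
  · refine ActsIrreducibly.conjDecay_two hq hN hV fun P hP => ?_
    obtain ⟨Q, hQ, hPQ⟩ := exists_mem_invtSubmodule_isCompl hN hg hP
    by_contra! hne
    have hQne : Q ≠ ⊥ := fun h => hne.2 (eq_top_of_isCompl_bot (h ▸ hPQ))
    have hfinrank := Submodule.finrank_add_eq_of_isCompl hPQ
    have := Submodule.nontrivial_iff_ne_bot.2 hne.1
    have := Submodule.nontrivial_iff_ne_bot.2 hQne
    have hP2 := two_le_finrank_of_eigenspace_eq_bot (eigenspace_restrictAut_eq_bot hP hbot)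
    have hQ2 := two_le_finrank_of_eigenspace_eq_bot (eigenspace_restrictAut_eq_bot hQ hbot)
    lia
  · push Not at hbot
    obtain ⟨c, hc⟩ := hbot
    have hone : Module.finrank F (Module.End.eigenspace (g : Module.End F V) c) = 1 := by
      have := Submodule.one_le_finrank_iff.2 hc
      have := heig c
      lia
    refine (conjDecay_finrank_eigenspace hN hg c).mono ?_
    rw [hone, hV]
    norm_num

end SmallDimension

section BaseSize

variable {F V : Type*} [Field F] [AddCommGroup V] [Module F V] [Finite F] [Finite V] {N : ℕ}

lemma card_mul_rpow_le_of_orderBound (hodd : Odd N) (hN : (N : F) ≠ 0) {n : ℕ}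
    (hV : Module.finrank F V = n + 2) {H : Subgroup (V ≃ₗ[F] V)} (hH : ∀ h ∈ H, h ^ N = 1) {σ : ℝ}
    (hσ : orderBound (Nat.card F) (n + 2) * ((Nat.card F : ℝ) ^ (-σ)) ^ 3 ≤ 5 / 3) :
    Nat.card H * ((Nat.card F : ℝ) ^ (-σ)) ^ 3 ≤
      5 / 3 * Nat.card (H ⊓ scalarSubgroup F V : Subgroup (V ≃ₗ[F] V)) := by
  have hle : ((scalarSubgroup F V).relIndex H : ℝ) ≤ orderBound (Nat.card F) (n + 2) :=
    Nat.cast_le.2 (relIndex_scalarSubgroup_le hodd hN hV hH)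
  calc (Nat.card H : ℝ) * ((Nat.card F : ℝ) ^ (-σ)) ^ 3
      = (Nat.card (H ⊓ scalarSubgroup F V : Subgroup (V ≃ₗ[F] V)) : ℝ) *
          ((scalarSubgroup F V).relIndex H * ((Nat.card F : ℝ) ^ (-σ)) ^ 3) := by
        rw [← mul_assoc, ← Nat.cast_mul, inf_comm, card_inf_mul_relIndex]
    _ ≤ (Nat.card (H ⊓ scalarSubgroup F V : Subgroup (V ≃ₗ[F] V)) : ℝ) * (5 / 3) := by
        gcongr
        exact (mul_le_mul_of_nonneg_right hle (by positivity)).trans hσ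
    _ = _ := mul_comm _ _

lemma exists_inf_conjBy_le_scalarSubgroup_of_three_le (hq : 3 ≤ Nat.card F) (hodd : Odd N)
    (hN : (N : F) ≠ 0) (hV : 2 ≤ Module.finrank F V) {H : Subgroup (V ≃ₗ[F] V)}
    (hH : ∀ h ∈ H, h ^ N = 1) (hscal : ∀ z ∈ scalarSubgroup F V, z ^ N = 1 → z ∈ H) :
    ∃ x ∈ slSubgroup F V, ∃ y ∈ slSubgroup F V, ∃ z ∈ slSubgroup F V,
      H ⊓ conjBy H x ⊓ conjBy H y ⊓ conjBy H z ≤ H ⊓ scalarSubgroup F V := by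
  obtain ⟨n, hn⟩ := Nat.exists_eq_add_of_le' hV
  refine exists_inf_conjBy_le_scalarSubgroup hodd hN hH hscal
    (fun g hg _ => conjDecay_of_two_mul_finrank_eigenspace_le hodd hN (hH g hg)) ?_
  rw [hn]
  refine card_mul_rpow_le_of_orderBound hodd hN hn hH ?_
  exact_mod_cast (orderBound_mul_rpow_le_one hq n).trans (by norm_num)

lemma exists_inf_conjBy_le_scalarSubgroup_of_card_eq_two (hq : Nat.card F = 2) (hodd : Odd N)
    (hN : (N : F) ≠ 0) (hV : 3 ≤ Module.finrank F V) {H : Subgroup (V ≃ₗ[F] V)}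
    (hH : ∀ h ∈ H, h ^ N = 1) (hscal : ∀ z ∈ scalarSubgroup F V, z ^ N = 1 → z ∈ H) :
    ∃ x ∈ slSubgroup F V, ∃ y ∈ slSubgroup F V, ∃ z ∈ slSubgroup F V,
      H ⊓ conjBy H x ⊓ conjBy H y ⊓ conjBy H z ≤ H ⊓ scalarSubgroup F V := by
  obtain ⟨n, hn⟩ := Nat.exists_eq_add_of_le' hV
  obtain _ | n := n
  · refine exists_inf_conjBy_le_scalarSubgroup hodd hN hH hscal
      (fun g hg _ => conjDecay_two_of_finrank_eq_three hq hN hn (hH g hg)) ?_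
    refine card_mul_rpow_le_of_orderBound hodd hN (n := 1) hn hH ?_
    have h21 : orderBound 2 3 = 21 := rfl
    rw [hq, h21, Real.rpow_neg (by norm_num), Real.rpow_ofNat]
    norm_num
  · refine exists_inf_conjBy_le_scalarSubgroup hodd hN hH hscal
      (fun g hg _ => conjDecay_of_two_mul_finrank_eigenspace_le hodd hN (hH g hg)) ?_
    have hcard : (3 : ℝ) * Nat.card H ≤ orderBound 2 (n + 4) :=
      mod_cast three_mul_card_le_orderBound hq hodd hN hn hH
    have hscalar : (1 : ℝ) ≤ Nat.card (H ⊓ scalarSubgroup F V : Subgroup (V ≃ₗ[F] V)) :=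
      mod_cast Nat.card_pos
    rw [hq, show Module.finrank F V = n + 4 from hn]
    have hfive := (mul_le_mul_of_nonneg_right hcard (by positivity)).trans
      (orderBound_two_mul_rpow_le_five n)
    rw [mul_assoc, ← le_div_iff₀' three_pos] at hfive
    exact hfive.trans (le_mul_of_one_le_right (by norm_num) hscalar)

lemma pow_eq_one_of_mem_sup {G : Type*} [Group G] {H K : Subgroup G} (hK : K ≤ Subgroup.center G)
    (hH : ∀ h ∈ H, h ^ N = 1) (hKN : ∀ k ∈ K, k ^ N = 1) : ∀ g ∈ H ⊔ K, g ^ N = 1 := by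
  intro g hg
  have : K.Normal :=
    ⟨fun k hk g => by rwa [Subgroup.mem_center_iff.1 (hK hk), mul_inv_cancel_right]⟩
  obtain ⟨h, hh, k, hk, rfl⟩ := Subgroup.mem_sup_of_normal_right.1 hg
  have hcomm : Commute h k := Subgroup.mem_center_iff.1 (hK hk) h
  rw [hcomm.mul_pow, hH h hh, hKN k hk, one_mul]

/-- Adjoining the scalars of exponent `N` to `H` reduces to a subgroup containing all of them. -/
theorem exists_inf_conjBy_le_scalarSubgroup_of_pow_eq_one (hodd : Odd N) (hN : (N : F) ≠ 0)
    (hV : 2 ≤ Module.finrank F V) (hqV : ¬ (Nat.card F = 2 ∧ Module.finrank F V = 2))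
    {H : Subgroup (V ≃ₗ[F] V)} (hH : ∀ h ∈ H, h ^ N = 1) :
    ∃ x ∈ slSubgroup F V, ∃ y ∈ slSubgroup F V, ∃ z ∈ slSubgroup F V,
      H ⊓ conjBy H x ⊓ conjBy H y ⊓ conjBy H z ≤ scalarSubgroup F V := by
  have : Nontrivial V := Module.nontrivial_of_finrank_pos (R := F) (by lia)
  set K : Subgroup (V ≃ₗ[F] V) := (rootsOfUnity N F).map (DistribMulAction.toModuleAut F V)
  have hKscal : K ≤ scalarSubgroup F V := Subgroup.map_le_range _ _
  have hKN : ∀ k ∈ K, k ^ N = 1 := by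
    rintro _ ⟨c, hc, rfl⟩
    rw [← map_pow, (mem_rootsOfUnity N c).1 hc, map_one]
  have hscal : ∀ z ∈ scalarSubgroup F V, z ^ N = 1 → z ∈ H ⊔ K := by
    rintro _ ⟨c, rfl⟩ hz
    obtain ⟨v, hv⟩ := exists_ne (0 : V)
    rw [← map_pow] at hz
    exact le_sup_right (a := H) ⟨c, (mem_rootsOfUnity N c).2 (Units.ext (smul_left_injective F hv
      ((LinearEquiv.congr_fun hz v).trans (one_smul F v).symm))), rfl⟩
  have hHK := pow_eq_one_of_mem_sup (hKscal.trans (scalarSubgroup_le_center F V)) hH hKN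
  obtain ⟨x, hx, y, hy, z, hz, hle⟩ : ∃ x ∈ slSubgroup F V, ∃ y ∈ slSubgroup F V,
      ∃ z ∈ slSubgroup F V, (H ⊔ K) ⊓ conjBy (H ⊔ K) x ⊓ conjBy (H ⊔ K) y ⊓ conjBy (H ⊔ K) z ≤
        (H ⊔ K) ⊓ scalarSubgroup F V := by
    have := Finite.one_lt_card (α := F)
    obtain hq | hq : 3 ≤ Nat.card F ∨ Nat.card F = 2 := by lia
    · exact exists_inf_conjBy_le_scalarSubgroup_of_three_le hq hodd hN hV hHK hscal
    · exact exists_inf_conjBy_le_scalarSubgroup_of_card_eq_two hq hodd hN (by lia) hHK hscal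
  have hmono (w) : conjBy H w ≤ conjBy (H ⊔ K) w := Subgroup.map_mono le_sup_left
  exact ⟨x, hx, y, hy, z, hz, (inf_le_inf (inf_le_inf (inf_le_inf le_sup_left (hmono x)) (hmono y))
    (hmono z)).trans (hle.trans inf_le_right)⟩

end BaseSize

section Transfer

variable {F : Type*} [Field F] {n : ℕ}

lemma coe_matrixAut (g : GL (Fin n) F) :
    (matrixAut n F g : (Fin n → F) →ₗ[F] (Fin n → F)) =
      Matrix.toLin' (g : Matrix (Fin n) (Fin n) F) := rfl

lemma matrixAut_mem_slSubgroup {g : GL (Fin n) F} :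
    matrixAut n F g ∈ slSubgroup F (Fin n → F) ↔ g ∈ SLsub n F := by
  rw [mem_slSubgroup, ← Units.val_inj, LinearEquiv.coe_det, coe_matrixAut, LinearMap.det_toLin']
  rfl

lemma matrixAut_mem_scalarSubgroup {g : GL (Fin n) F} :
    matrixAut n F g ∈ scalarSubgroup F (Fin n → F) ↔
      ∃ c : F, (g : Matrix (Fin n) (Fin n) F) = c • (1 : Matrix (Fin n) (Fin n) F) := by
  simp_rw [mem_scalarSubgroup, ← Matrix.toLin'.injective.eq_iff, ← coe_matrixAut, map_smul,
    Matrix.toLin'_one, LinearMap.ext_iff]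
  rfl

end Transfer

theorem stmt1_general {F : Type*} [Field F] [Finite F] {n : ℕ} (hn : 2 ≤ n)
    (hqn : ¬ (Nat.card F = 2 ∧ n = 2)) {H : Subgroup (GL (Fin n) F)} (hodd : Odd (Nat.card H))
    (hchar : (Nat.card H : F) ≠ 0) :
    ∃ x ∈ SLsub n F, ∃ y ∈ SLsub n F, ∃ z ∈ SLsub n F,
      ∀ g ∈ H ⊓ conjBy H x ⊓ conjBy H y ⊓ conjBy H z,
        ∃ c : F, (g : Matrix (Fin n) (Fin n) F) = c • (1 : Matrix (Fin n) (Fin n) F) := by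
  have hpow : ∀ k ∈ H.map (matrixAut n F).toMonoidHom, k ^ Nat.card H = 1 := by
    rintro _ ⟨h, hh, rfl⟩
    rw [← map_pow, orderOf_dvd_iff_pow_eq_one.1 (H.orderOf_dvd_natCard hh), map_one]
  have hdim : Module.finrank F (Fin n → F) = n := Module.finrank_fin_fun F
  obtain ⟨x, hx, y, hy, z, hz, hle⟩ := exists_inf_conjBy_le_scalarSubgroup_of_pow_eq_one hodd hchar
    (hn.trans_eq hdim.symm) (hdim.symm ▸ hqn) hpow
  obtain ⟨x, rfl⟩ := (matrixAut n F).surjective x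
  obtain ⟨y, rfl⟩ := (matrixAut n F).surjective y
  obtain ⟨z, rfl⟩ := (matrixAut n F).surjective z
  refine ⟨x, matrixAut_mem_slSubgroup.1 hx, y, matrixAut_mem_slSubgroup.1 hy, z,
    matrixAut_mem_slSubgroup.1 hz, ?_⟩
  rintro g ⟨⟨⟨hg, hgx⟩, hgy⟩, hgz⟩
  exact matrixAut_mem_scalarSubgroup.1 (hle ⟨⟨⟨Subgroup.mem_map_of_mem _ hg,
    (conjBy_map _ H).2 hgx⟩, (conjBy_map _ H).2 hgy⟩, (conjBy_map _ H).2 hgz⟩)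

section Hall

lemma IsHallSubgroup.odd_card {G : Type*} [Group G] {π : Set ℕ} {H : Subgroup G}
    (hH : IsHallSubgroup π H) (hπ : 2 ∉ π) : Odd (Nat.card H) := by
  rw [← Nat.not_even_iff_odd, even_iff_two_dvd]
  exact fun h => hπ (hH.1 2 Nat.prime_two h)

lemma IsHallSubgroup.natCast_card_ne_zero {G : Type*} [Group G] {π : Set ℕ} {H : Subgroup G}
    (hH : IsHallSubgroup π H) {p : ℕ} (hp : p.Prime) (hπ : p ∉ π) (R : Type*)
    [AddMonoidWithOne R] [CharP R p] : (Nat.card H : R) ≠ 0 := fun h =>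
  hπ (hH.1 p hp ((CharP.cast_eq_zero_iff R p _).1 h))

lemma card_GL_two_of_card_eq_two {F : Type*} [Field F] [Finite F] (hF : Nat.card F = 2) :
    Nat.card (GL (Fin 2) F) = 6 := by
  have := Fintype.ofFinite F
  rw [Matrix.card_GL_field, ← Nat.card_eq_fintype_card, hF]
  rfl

lemma ncard_inter_prime_dvd_two_mul_le_one {π : Set ℕ} (hπ : 2 ∉ π) {p : ℕ} (hp : p.Prime) :
    (π ∩ {r : ℕ | r.Prime ∧ r ∣ 2 * p}).ncard ≤ 1 := by
  suffices π ∩ {r : ℕ | r.Prime ∧ r ∣ 2 * p} ⊆ {p} from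
    (Set.ncard_le_ncard this).trans_eq (Set.ncard_singleton p)
  rintro r ⟨hr, hrp, hdvd⟩
  obtain h | h := hrp.dvd_mul.1 hdvd
  · exact absurd ((Nat.prime_dvd_prime_iff_eq hrp Nat.prime_two).1 h ▸ hr) hπ
  · exact (Nat.prime_dvd_prime_iff_eq hrp hp).1 h

lemma not_card_eq_two_and_eq_two {F : Type*} [Field F] [Finite F] {n : ℕ} {π : Set ℕ} (hπ : 2 ∉ π)
    (hcard : 2 ≤ (π ∩ {r : ℕ | r.Prime ∧ r ∣ Nat.card (GL (Fin n) F)}).ncard) :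
    ¬ (Nat.card F = 2 ∧ n = 2) := by
  rintro ⟨hF, rfl⟩
  rw [card_GL_two_of_card_eq_two hF] at hcard
  exact (hcard.trans (ncard_inter_prime_dvd_two_mul_le_one hπ Nat.prime_three)).not_gt one_lt_two

end Hall

theorem stmt1 (p f q n : ℕ) (hp : p.Prime) (hf : 1 ≤ f) (hq : q = p ^ f)
    (F : Type) [Field F] [Fintype F] (hcard : Fintype.card F = q)
    (hn : 2 ≤ n) (hnonsolv : ¬ IsSolvable (GL (Fin n) F))
    (π : Set ℕ) (hπ : ∀ r ∈ π, r.Prime) (h2pi : 2 ∉ π) (hppi : p ∉ π)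
    (htwo : 2 ≤ (π ∩ {r : ℕ | r.Prime ∧ r ∣ Nat.card (GL (Fin n) F)}).ncard)
    (H : Subgroup (GL (Fin n) F)) (hH : IsHallSubgroup π H)
    :
    ∃ x y z : GL (Fin n) F,
      x ∈ (H : Set (GL (Fin n) F)) * (SLsub n F : Set (GL (Fin n) F)) ∧
      y ∈ (H : Set (GL (Fin n) F)) * (SLsub n F : Set (GL (Fin n) F)) ∧
      z ∈ (H : Set (GL (Fin n) F)) * (SLsub n F : Set (GL (Fin n) F)) ∧
    ∀ g ∈ H ⊓ conjBy H x ⊓ conjBy H y ⊓ conjBy H z,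
      ∃ c : F, (g : Matrix (Fin n) (Fin n) F) = c • (1 : Matrix (Fin n) (Fin n) F) := by
  have : Fact p.Prime := ⟨hp⟩
  have : CharP F p := charP_of_card_eq_prime_pow (hcard.trans hq)
  obtain ⟨x, hx, y, hy, z, hz, hscal⟩ :=
    stmt1_general hn (not_card_eq_two_and_eq_two h2pi htwo) (hH.odd_card h2pi)
      (hH.natCast_card_ne_zero hp hppi F)
  have hsub : (SLsub n F : Set (GL (Fin n) F)) ⊆ H * SLsub n F :=
    Set.subset_mul_right _ H.one_mem
  exact ⟨x, y, z, hsub hx, hsub hy, hsub hz, hscal⟩
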